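/- Assume Ω is a bounded C¹ domain with outward normal ν, a ∈ C(Ω̄×ℝ;𝕊ⁿ(θ₀)), b is Lipschitz with b(0)=0, the origin is globally asymptotically stable for Ẋ = b(X), and b·ν < 0 on ∂Ω. With the perturbed Hamiltonians 𝓗_δ^± and quasi-potentials V_δ^± defined in the context (for a fixed β₀ and any admissible choice of cutoffs χ_δ), setting M_δ^± := min_{∂Ω} V_δ^±, Γ_δ^± := argmin(V_δ^±|∂Ω), M₀ := min_{∂Ω} V₀ and Γ₀ := argmin(V₀|∂Ω), one has: lim_{δ→0⁺} M_δ⁺ = lim_{δ→0⁺} M_δ⁻ = M₀, and the Kuratowski upper limits satisfy limsup_{δ→0⁺} Γ_δ⁺ ∪ limsup_{δ→0⁺} Γ_δ⁻ ⊂ Γ₀. -/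

import Mathlib

open Set Filter Metric Topology
open scoped ENNReal

noncomputable section

/-- `n`-dimensional Euclidean space. -/
abbrev Eu (n : ℕ) := EuclideanSpace ℝ (Fin n)

variable {n : ℕ}

/-- Euclidean dot product. -/
def dotp (x y : Eu n) : ℝ := ∑ i, x i * y i

/-- The quadratic form `A p · p` of a matrix `A`. -/
def mquad (A : Matrix (Fin n) (Fin n) ℝ) (p : Eu n) : ℝ := ∑ i, ∑ j, A i j * p i * p j

/-- `A ∈ 𝕊ⁿ(θ)`: symmetric with `θ I ≤ A ≤ θ⁻¹ I`. -/
def memS (θ : ℝ) (A : Matrix (Fin n) (Fin n) ℝ) : Prop :=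
  A.IsSymm ∧ ∀ p : Eu n, θ * ‖p‖ ^ 2 ≤ mquad A p ∧ mquad A p ≤ θ⁻¹ * ‖p‖ ^ 2

/-- order of symmetric matrices (via quadratic forms). -/
def mle (A B : Matrix (Fin n) (Fin n) ℝ) : Prop := ∀ p : Eu n, mquad A p ≤ mquad B p

/-- trace of the product `A·H`. -/
def trMul (A H : Matrix (Fin n) (Fin n) ℝ) : ℝ := ∑ i, ∑ j, A i j * H j i

/-- the Pucci maximal operator associated with `𝕊ⁿ(θ)`. -/
def pucci (θ : ℝ) (X : Matrix (Fin n) (Fin n) ℝ) : ℝ :=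
  sSup ((fun A => trMul A X) '' {A | memS θ A})

/-- time derivative of `u(x,t)`. -/
def tD (u : Eu n → ℝ → ℝ) (x : Eu n) (t : ℝ) : ℝ := deriv (u x) t

/-- spatial gradient of `u(x,t)`. -/
def sG (u : Eu n → ℝ → ℝ) (x : Eu n) (t : ℝ) : Eu n := gradient (fun y => u y t) x

/-- spatial Hessian matrix of `u(x,t)`. -/
def sH (u : Eu n → ℝ → ℝ) (x : Eu n) (t : ℝ) : Matrix (Fin n) (Fin n) ℝ :=
  fun i j => fderiv ℝ (fun y => sG u y t i) x (EuclideanSpace.single j 1)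

/-- Hessian matrix of a static function. -/
def hessS (v : Eu n → ℝ) (x : Eu n) : Matrix (Fin n) (Fin n) ℝ :=
  fun i j => fderiv ℝ (fun y => gradient v y i) x (EuclideanSpace.single j 1)

/-- closed parabolic cylinder `Q̄_T = closure Ω × [0,T]` (with `T ∈ (0,∞]`). -/
def cylC (Ω : Set (Eu n)) (T : ℝ≥0∞) : Set (Eu n × ℝ) :=
  {p | p.1 ∈ closure Ω ∧ 0 ≤ p.2 ∧ ENNReal.ofReal p.2 ≤ T}

/-- open parabolic cylinder `Q_T = Ω × (0,T)`. -/
def cylO (Ω : Set (Eu n)) (T : ℝ≥0∞) : Set (Eu n × ℝ) :=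
  {p | p.1 ∈ Ω ∧ 0 < p.2 ∧ ENNReal.ofReal p.2 < T}

/-- `u ∈ C^{2,1}(Q_T)`. -/
def C21 (u : Eu n → ℝ → ℝ) (Ω : Set (Eu n)) (T : ℝ≥0∞) : Prop :=
  (∀ x ∈ Ω, ∀ t : ℝ, 0 < t → ENNReal.ofReal t < T →
     ContDiffAt ℝ 2 (fun y => u y t) x ∧ DifferentiableAt ℝ (u x) t) ∧
  ContinuousOn (fun p : Eu n × ℝ => tD u p.1 p.2) (cylO Ω T) ∧
  ContinuousOn (fun p : Eu n × ℝ => sH u p.1 p.2) (cylO Ω T)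

/-- `u ∈ C(Q̄_T) ∩ C^{2,1}(Q_T)`. -/
def Classical21 (u : Eu n → ℝ → ℝ) (Ω : Set (Eu n)) (T : ℝ≥0∞) : Prop :=
  ContinuousOn (fun p : Eu n × ℝ => u p.1 p.2) (cylC Ω T) ∧ C21 u Ω T

/-- a coefficient field in `C(Q̄_T; 𝕊ⁿ(θ))`. -/
def MatC (θ : ℝ) (A : Eu n → ℝ → Matrix (Fin n) (Fin n) ℝ) (Ω : Set (Eu n))
    (T : ℝ≥0∞) : Prop :=
  ContinuousOn (fun p : Eu n × ℝ => A p.1 p.2) (cylC Ω T) ∧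
  ∀ p ∈ cylC Ω T, memS θ (A p.1 p.2)

/-- `u` is a classical solution of `u_t = ε tr[A D²u] + b·Du` in `Q_T`. -/
def SolveL (ε : ℝ) (A : Eu n → ℝ → Matrix (Fin n) (Fin n) ℝ) (b : Eu n → Eu n)
    (u : Eu n → ℝ → ℝ) (Ω : Set (Eu n)) (T : ℝ≥0∞) : Prop :=
  ∀ x ∈ Ω, ∀ t : ℝ, 0 < t → ENNReal.ofReal t < T →
    tD u x t = ε * trMul (A x t) (sH u x t) + dotp (b x) (sG u x t)

/-- `u` is a classical subsolution of `(L)` in `Q_T`. -/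
def SubsolL (ε : ℝ) (A : Eu n → ℝ → Matrix (Fin n) (Fin n) ℝ) (b : Eu n → Eu n)
    (u : Eu n → ℝ → ℝ) (Ω : Set (Eu n)) (T : ℝ≥0∞) : Prop :=
  ∀ x ∈ Ω, ∀ t : ℝ, 0 < t → ENNReal.ofReal t < T →
    tD u x t ≤ ε * trMul (A x t) (sH u x t) + dotp (b x) (sG u x t)

/-- `u` is a classical supersolution of `(L)` in `Q_T`. -/
def SupersolL (ε : ℝ) (A : Eu n → ℝ → Matrix (Fin n) (Fin n) ℝ) (b : Eu n → Eu n)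
    (u : Eu n → ℝ → ℝ) (Ω : Set (Eu n)) (T : ℝ≥0∞) : Prop :=
  ∀ x ∈ Ω, ∀ t : ℝ, 0 < t → ENNReal.ofReal t < T →
    ε * trMul (A x t) (sH u x t) + dotp (b x) (sG u x t) ≤ tD u x t

/-- viscosity subsolution of `H(x,Du) = 0` on `A`. -/
def ViscSub (H : Eu n → Eu n → ℝ) (A : Set (Eu n)) (u : Eu n → ℝ) : Prop :=
  ∀ φ : Eu n → ℝ, ContDiff ℝ 1 φ → ∀ x ∈ A,
    IsLocalMaxOn (fun y => u y - φ y) A x → H x (gradient φ x) ≤ 0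

/-- viscosity supersolution of `H(x,Du) = 0` on `A`. -/
def ViscSup (H : Eu n → Eu n → ℝ) (A : Set (Eu n)) (u : Eu n → ℝ) : Prop :=
  ∀ φ : Eu n → ℝ, ContDiff ℝ 1 φ → ∀ x ∈ A,
    IsLocalMinOn (fun y => u y - φ y) A x → 0 ≤ H x (gradient φ x)

/-- the Hamiltonian `H_α(x,p) = α(x) p·p + b(x)·p`. -/
def Ham (α : Eu n → Matrix (Fin n) (Fin n) ℝ) (b : Eu n → Eu n) (x p : Eu n) : ℝ :=
  mquad (α x) p + dotp (b x) p

/-- the quasi-potential `V_α`: the pointwise supremum (= maximal element) of all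
Lipschitz viscosity subsolutions of `H_α(x,Du)=0` in `Ω` vanishing at the origin. -/
def Vq (α : Eu n → Matrix (Fin n) (Fin n) ℝ) (b : Eu n → Eu n) (Ω : Set (Eu n))
    (x : Eu n) : ℝ :=
  sSup {r | ∃ u : Eu n → ℝ, (∃ K : NNReal, LipschitzOnWith K u (closure Ω)) ∧
    u 0 = 0 ∧ ViscSub (Ham α b) Ω u ∧ r = u x}

/-- `M_α = min_{∂Ω} V_α`. -/
def Mq (α : Eu n → Matrix (Fin n) (Fin n) ℝ) (b : Eu n → Eu n) (Ω : Set (Eu n)) : ℝ :=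
  sInf (Vq α b Ω '' frontier Ω)

/-- `argmin (V_α | ∂Ω)`. -/
def argminV (α : Eu n → Matrix (Fin n) (Fin n) ℝ) (b : Eu n → Eu n)
    (Ω : Set (Eu n)) : Set (Eu n) :=
  {x ∈ frontier Ω | ∀ y ∈ frontier Ω, Vq α b Ω x ≤ Vq α b Ω y}

/-- `Σ_α^m = {x ∈ Ω̄ : V_α(x) ≤ m}`. -/
def SigmaM (α : Eu n → Matrix (Fin n) (Fin n) ℝ) (b : Eu n → Eu n) (Ω : Set (Eu n))
    (m : ℝ) : Set (Eu n) :=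
  {x ∈ closure Ω | Vq α b Ω x ≤ m}

/-- `Ω` is a bounded `C¹` domain with outward unit normal `ν`. -/
def IsBdC1With (Ω : Set (Eu n)) (ν : Eu n → Eu n) : Prop :=
  IsOpen Ω ∧ Bornology.IsBounded Ω ∧
  ∃ ρ : Eu n → ℝ, ContDiff ℝ 1 ρ ∧ Ω = {x | ρ x < 0} ∧
    ∀ x ∈ frontier Ω, gradient ρ x ≠ 0 ∧ ν x = ‖gradient ρ x‖⁻¹ • gradient ρ x

/-- `X` is the flow of `b`, and the origin is globally asymptotically stable. -/
def GAS (b : Eu n → Eu n) (X : ℝ → Eu n → Eu n) : Prop :=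
  (∀ x, X 0 x = x) ∧ (∀ x t, HasDerivAt (fun s => X s x) (b (X t x)) t) ∧
  (∀ x, Tendsto (fun t => X t x) atTop (nhds 0)) ∧
  (∀ ε > (0:ℝ), ∃ δ > (0:ℝ), ∀ x : Eu n, ‖x‖ < δ → ∀ t ≥ (0:ℝ), ‖X t x‖ < ε)

/-- `Ω_δ = {x ∈ Ω : dist(x,∂Ω) > δ}`. -/
def Omd (Ω : Set (Eu n)) (δ : ℝ) : Set (Eu n) := {x ∈ Ω | δ < infDist x (frontier Ω)}

/-- `Ω^Π_δ = {x ∈ Ω̄ : dist(x, ∂Ω \ Π) > δ}`. -/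
def OmPid (Ω Pset : Set (Eu n)) (δ : ℝ) : Set (Eu n) :=
  {x ∈ closure Ω | δ < infDist x (frontier Ω \ Pset)}

/-- the standing assumptions (B). -/
structure SettingB (n : ℕ) where
  Ω : Set (Eu n)
  ν : Eu n → Eu n
  g : Eu n → ℝ
  θ₀ : ℝ
  a : Eu n → ℝ → Matrix (Fin n) (Fin n) ℝ
  b : Eu n → Eu n
  b₀ : ℝ
  r₀ : ℝ
  θ₀_mem : θ₀ ∈ Set.Ioc (0 : ℝ) 1
  domain : IsBdC1With Ω ν
  zero_mem : (0 : Eu n) ∈ Ω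
  g_cont : ContinuousOn g (closure Ω)
  a_cont : ContinuousOn (fun p : Eu n × ℝ => a p.1 p.2) (closure Ω ×ˢ Set.univ)
  a_mem : ∀ x ∈ closure Ω, ∀ c : ℝ, memS θ₀ (a x c)
  b_lip : ∃ K : NNReal, LipschitzWith K b
  b_zero : b 0 = 0
  b_gas : ∃ X : ℝ → Eu n → Eu n, GAS b X
  b_inward : ∀ x ∈ frontier Ω, dotp (b x) (ν x) < 0
  b₀_pos : 0 < b₀
  r₀_pos : 0 < r₀
  ball_sub : closedBall (0 : Eu n) r₀ ⊆ Ω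
  b_coerc : ∀ x ∈ ball (0 : Eu n) r₀, dotp (b x) x ≤ -b₀ * ‖x‖ ^ 2

namespace SettingB

variable (S : SettingB n)

/-- the quasi-potential `V^c` associated with `(a(·,c), b)`. -/
def Vc (c : ℝ) : Eu n → ℝ := Vq (fun x => S.a x c) S.b S.Ω

/-- `M(c) = min_{∂Ω} V^c`. -/
def M (c : ℝ) : ℝ := sInf (S.Vc c '' frontier S.Ω)

/-- `G(c) = {g(x) : x ∈ argmin(V^c|∂Ω)}`. -/
def Gset (c : ℝ) : Set ℝ := S.g '' argminV (fun x => S.a x c) S.b S.Ω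

/-- `G⁺(c) = max G(c)`. -/
def Gp (c : ℝ) : ℝ := sSup (S.Gset c)

/-- `G⁻(c) = min G(c)`. -/
def Gm (c : ℝ) : ℝ := sInf (S.Gset c)

/-- `c₀ = g(0)`. -/
def c0 : ℝ := S.g 0

/-- `g_min = min_{Ω̄} g`. -/
def gmin : ℝ := sInf (S.g '' closure S.Ω)

/-- `g_max = max_{Ω̄} g`. -/
def gmax : ℝ := sSup (S.g '' closure S.Ω)

/-- the crossing value `c₁`. -/
def c1 : ℝ :=
  if S.c0 ≤ S.Gp S.c0 then sInf {c | S.c0 ≤ c ∧ S.Gm c ≤ c}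
  else sSup {c | c ≤ S.c0 ∧ c ≤ S.Gp c}

/-- the function `c̄ : (0,∞) → I_g`. -/
def cbar (l : ℝ) : ℝ :=
  if l < S.M S.c0 ∨ S.c1 = S.c0 then S.c0
  else if S.c0 < S.c1 then min S.c1 (sInf {c | c ∈ Set.Icc S.c0 S.c1 ∧ S.M c = l})
  else max S.c1 (sSup {c | c ∈ Set.Icc S.c1 S.c0 ∧ S.M c = l})

/-- assumption (FK13): `G⁺(c₀) = G⁻(c₀)`. -/
def FK13 : Prop := S.Gp S.c0 = S.Gm S.c0

/-- assumption (FK12). -/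
def FK12 : Prop :=
  ∀ δ₀ > (0:ℝ), ∃ δ ∈ Set.Ioc (0:ℝ) δ₀,
    (S.c1 ≤ S.c0 ∧ S.gmin < S.c1 → S.c1 - δ < S.Gm (S.c1 - δ)) ∧
    (S.c0 ≤ S.c1 ∧ S.c1 < S.gmax → S.Gp (S.c1 + δ) < S.c1 + δ)

/-- `u` is a classical (`C(Q̄) ∩ C^{2,1}(Q)`) solution of the quasi-linear equation (QL). -/
def SolvesQL (ε : ℝ) (u : Eu n → ℝ → ℝ) : Prop :=
  Classical21 u S.Ω ⊤ ∧ SolveL ε (fun x t => S.a x (u x t)) S.b u S.Ω ⊤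

/-- the boundary condition (BC): `u = g` on the parabolic boundary of `Q`. -/
def BC (u : Eu n → ℝ → ℝ) : Prop :=
  (∀ x ∈ closure S.Ω, u x 0 = S.g x) ∧ ∀ x ∈ frontier S.Ω, ∀ t > (0:ℝ), u x t = S.g x

end SettingB

/-- Kuratowski upper limit of a family of sets as `δ → 0⁺` (within `(0,δ₀)`). -/
def KurLimsup {n : ℕ} (δ₀ : ℝ) (Γ : ℝ → Set (Eu n)) : Set (Eu n) :=
  {x | ∃ (δs : ℕ → ℝ) (xs : ℕ → Eu n),
    (∀ k, δs k ∈ Set.Ioo (0:ℝ) δ₀) ∧ Filter.Tendsto δs Filter.atTop (nhds 0) ∧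
    (∀ k, xs k ∈ Γ (δs k)) ∧ Filter.Tendsto xs Filter.atTop (nhds x)}

/-!
Coercivity makes the subsolutions Lipschitz, with one constant for all coefficients of a given
ellipticity: a bounded `C¹` domain is quasiconvex once it is connected, and `Ω` is connected because
it is invariant under the flow of `b`, which brings every point to `0`.

Upper bound: by Arzelà–Ascoli a limit of the perturbed quasi-potentials is a subsolution for the
limit coefficients, hence lies below `V₀`.

Lower bound: near `∂Ω` the perturbed coefficients are not controlled, so `V₀` cannot be compared
with `V_δ` directly. Truncating `V₀` at a level `c < M₀` makes it constant near `∂Ω`, and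
multiplying it by a factor slightly below `1` absorbs the coefficient error on the compact set
where it is not constant; the result is a subsolution for every small `δ`.

Argmins: at a point `z ∈ ∂Ω` with `V₀ z > M₀`, since `b · ν < 0`, there is a small `C¹` bump
supported near `z` and decreasing along `b`. Adding it to the truncated function keeps the latter a
subsolution and lifts it strictly above `M₀` around `z`, so minimizers of `V_δ` stay away from `z`.
-/

section QuadraticForms

lemma dotp_eq_inner (x y : Eu n) : dotp x y = inner ℝ x y := by
  simp [dotp, PiLp.inner_apply, mul_comm]

lemma mquad_add (A B : Matrix (Fin n) (Fin n) ℝ) (p : Eu n) :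
    mquad (A + B) p = mquad A p + mquad B p := by
  simp [mquad, add_mul, Finset.sum_add_distrib]

lemma mquad_smul (c : ℝ) (A : Matrix (Fin n) (Fin n) ℝ) (p : Eu n) :
    mquad (c • A) p = c * mquad A p := by
  simp [mquad, Finset.mul_sum, mul_assoc]

lemma mquad_one (p : Eu n) : mquad (1 : Matrix (Fin n) (Fin n) ℝ) p = ‖p‖ ^ 2 := by
  rw [EuclideanSpace.real_norm_sq_eq]
  simp [mquad, Matrix.one_apply, pow_two]

lemma mquad_smul_right (A : Matrix (Fin n) (Fin n) ℝ) (t : ℝ) (p : Eu n) :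
    mquad A (t • p) = t ^ 2 * mquad A p := by
  simp only [mquad, Finset.mul_sum, PiLp.smul_apply, smul_eq_mul]
  exact Finset.sum_congr rfl fun i _ => Finset.sum_congr rfl fun j _ => by ring

lemma continuous_mquad :
    Continuous fun q : Matrix (Fin n) (Fin n) ℝ × Eu n => mquad q.1 q.2 := by
  unfold mquad
  fun_prop

end QuadraticForms

section Gradient

variable {E : Type*} [NormedAddCommGroup E] [InnerProductSpace ℝ E]

lemma contDiff_norm_sub_sq (z : E) : ContDiff ℝ 1 fun y : E => ‖y - z‖ ^ 2 :=
  (contDiff_id.sub contDiff_const).norm_sq ℝ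

variable [CompleteSpace E] {f g : E → ℝ} {p q x : E}

lemma hasGradientAt_add (hf : HasGradientAt f p x) (hg : HasGradientAt g q x) :
    HasGradientAt (fun y => f y + g y) (p + q) x := by
  rw [hasGradientAt_iff_hasFDerivAt] at *
  rw [map_add]
  exact hf.add hg

lemma hasGradientAt_sub (hf : HasGradientAt f p x) (hg : HasGradientAt g q x) :
    HasGradientAt (fun y => f y - g y) (p - q) x := by
  rw [hasGradientAt_iff_hasFDerivAt] at *
  rw [map_sub]
  exact hf.sub hg

lemma hasGradientAt_const_mul (c : ℝ) (hf : HasGradientAt f p x) :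
    HasGradientAt (fun y => c * f y) (c • p) x := by
  rw [hasGradientAt_iff_hasFDerivAt] at *
  simpa using hf.const_mul c

lemma hasGradientAt_norm_sub_sq (z x : E) :
    HasGradientAt (fun y => ‖y - z‖ ^ 2) ((2 : ℝ) • (x - z)) x := by
  rw [hasGradientAt_iff_hasFDerivAt]
  refine ((hasFDerivAt_id (𝕜 := ℝ) x).sub_const z).norm_sq.congr_fderiv ?_
  ext v
  simp [InnerProductSpace.toDual_apply_apply]

lemma gradient_eq_of_isLocalMax_sub (hf : HasGradientAt f p x) (hg : HasGradientAt g q x)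
    (h : IsLocalMax (fun y => f y - g y) x) : q = p := by
  have hzero := h.hasFDerivAt_eq_zero (hasGradientAt_sub hf hg).hasFDerivAt
  rw [map_eq_zero_iff _ (InnerProductSpace.toDual ℝ E).injective] at hzero
  exact (sub_eq_zero.1 hzero).symm

lemma hasGradientAt_of_contDiff (hf : ContDiff ℝ 1 f) (x : E) :
    HasGradientAt f (gradient f x) x :=
  (hf.differentiable one_ne_zero x).hasGradientAt

lemma continuous_gradient_of_contDiff (hf : ContDiff ℝ 1 f) : Continuous (gradient f) :=
  (LinearIsometryEquiv.continuous _).comp (hf.continuous_fderiv one_ne_zero)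

end Gradient

section Hamiltonian

variable {α : Eu n → Matrix (Fin n) (Fin n) ℝ} {b : Eu n → Eu n} {x : Eu n}

lemma Ham_zero (α : Eu n → Matrix (Fin n) (Fin n) ℝ) (b : Eu n → Eu n) (x : Eu n) :
    Ham α b x 0 = 0 := by
  simp [Ham, mquad, dotp]

lemma continuousAt_Ham (hα : ContinuousAt α x) (hb : ContinuousAt b x) (p : Eu n) :
    ContinuousAt (fun q : Eu n × Eu n => Ham α b q.1 q.2) (x, p) := by
  have hα' : ContinuousAt (fun q : Eu n × Eu n => (α q.1, q.2)) (x, p) :=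
    (hα.comp' continuousAt_fst).prodMk continuousAt_snd
  have hb' : ContinuousAt (fun q : Eu n × Eu n => b q.1) (x, p) := hb.comp' continuousAt_fst
  simp only [Ham, dotp_eq_inner]
  exact (continuous_mquad.continuousAt.comp hα').add (hb'.inner continuousAt_snd)

lemma norm_le_div_of_Ham_nonpos {p : Eu n} {θ B : ℝ} (hθ : 0 < θ)
    (hα : θ * ‖p‖ ^ 2 ≤ mquad (α x) p) (hb : ‖b x‖ ≤ B) (hH : Ham α b x p ≤ 0) :
    ‖p‖ ≤ B / θ := by
  rcases (norm_nonneg p).eq_or_lt with hp | hp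
  · rw [← hp]
    exact div_nonneg ((norm_nonneg _).trans hb) hθ.le
  · rw [le_div_iff₀ hθ]
    refine le_of_mul_le_mul_right ?_ hp
    have hinner : -(‖b x‖ * ‖p‖) ≤ inner ℝ (b x) p :=
      (abs_le.1 (abs_real_inner_le_norm (b x) p)).1
    calc ‖p‖ * θ * ‖p‖ ≤ mquad (α x) p := by linarith
      _ ≤ ‖b x‖ * ‖p‖ := by
        rw [Ham, dotp_eq_inner] at hH
        linarith
      _ ≤ B * ‖p‖ := by gcongr

end Hamiltonian

section LipschitzAlongSegments

/-- `u` is Lipschitz with constant `C` along each segment contained in `s`: the form in which a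
gradient bound on `u` survives when `s` is not convex. -/
def LipschitzAlongSegments {E : Type*} [SeminormedAddCommGroup E] [NormedSpace ℝ E]
    (C : NNReal) (u : E → ℝ) (s : Set E) : Prop :=
  ∀ ⦃x y⦄, segment ℝ x y ⊆ s → dist (u x) (u y) ≤ C * dist x y

lemma exists_isMaxOn_closedBall_isLocalMax {X : Type*} [PseudoMetricSpace X] [ProperSpace X]
    {f : X → ℝ} {x : X} {r : ℝ} (hr : 0 ≤ r) (hf : ContinuousOn f (closedBall x r))
    (hsphere : ∀ y ∈ sphere x r, f y < f x) :
    ∃ y ∈ ball x r, IsMaxOn f (closedBall x r) y ∧ IsLocalMax f y := by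
  have hx : x ∈ closedBall x r := mem_closedBall_self hr
  obtain ⟨y, hy, hmax⟩ := (isCompact_closedBall x r).exists_isMaxOn ⟨x, hx⟩ hf
  have hyr : y ∈ ball x r :=
    lt_of_le_of_ne hy fun h => (hsphere y h).not_ge (hmax hx)
  exact ⟨y, hyr, hmax, hmax.isLocalMax (mem_of_superset (isOpen_ball.mem_nhds hyr)
    ball_subset_closedBall)⟩

lemma le_two_mul_dist_of_halving {X : Type*} [PseudoMetricSpace X] {f : X → ℝ} {x : X}
    {r C K : ℝ} (hC : 0 ≤ C) (hK : 0 ≤ K) (hfK : ∀ y ∈ ball x r, f y ≤ K * dist y x)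
    (hhalf : ∀ y ∈ ball x r, ∃ z, dist z x ≤ dist y x / 2 ∧ f y ≤ C * dist y x + f z)
    {y : X} (hy : y ∈ ball x r) : f y ≤ 2 * C * dist y x := by
  have hiter : ∀ m : ℕ, ∀ y ∈ ball x r, f y ≤ (2 * C + K * (1 / 2) ^ m) * dist y x := by
    intro m
    induction m with
    | zero =>
      intro y hy
      calc f y ≤ K * dist y x := hfK y hy
        _ ≤ (2 * C + K * (1 / 2) ^ 0) * dist y x := by gcongr; simpa using hC
    | succ m ih =>
      intro y hy
      obtain ⟨z, hzy, hfz⟩ := hhalf y hy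
      have hz : z ∈ ball x r := by
        have := dist_nonneg (x := y) (y := x)
        rw [mem_ball] at hy ⊢
        linarith
      calc f y ≤ C * dist y x + (2 * C + K * (1 / 2) ^ m) * dist z x :=
            hfz.trans (by gcongr; exact ih z hz)
        _ ≤ C * dist y x + (2 * C + K * (1 / 2) ^ m) * (dist y x / 2) := by gcongr
        _ = (2 * C + K * (1 / 2) ^ (m + 1)) * dist y x := by ring
  have hlim : Tendsto (fun m : ℕ => (2 * C + K * (1 / 2) ^ m) * dist y x) atTop
      (𝓝 ((2 * C + K * 0) * dist y x)) :=
    ((tendsto_pow_atTop_nhds_zero_of_lt_one (by norm_num) (by norm_num)).const_mul K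
      |>.const_add _).mul_const _
  rw [mul_zero, add_zero] at hlim
  exact ge_of_tendsto' hlim fun m => hiter m y hy

lemma lipschitzAlongSegments_of_eventually_sub_le {E : Type*} [NormedAddCommGroup E]
    [NormedSpace ℝ E] {u : E → ℝ} {s : Set E} {C : NNReal} (hu : ContinuousOn u s)
    (hloc : ∀ x ∈ s, ∀ᶠ y in 𝓝 x, u y - u x ≤ C * dist y x) :
    LipschitzAlongSegments C u s := by
  have hone : ∀ x y, segment ℝ x y ⊆ s → u y - u x ≤ C * dist x y := by
    intro x y hxy
    set γ : ℝ →ᵃ[ℝ] E := AffineMap.lineMap x y with hγ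
    have hγs : MapsTo γ (Icc 0 1) s := fun t ht =>
      hxy (segment_eq_image_lineMap ℝ x y ▸ mem_image_of_mem _ ht)
    have hγc : Continuous γ := AffineMap.lineMap_continuous
    have hslope : ∀ t ∈ Ico (0 : ℝ) 1, ∀ r, C * dist x y < r →
        ∃ᶠ τ in 𝓝[>] t, slope (u ∘ γ) t τ < r := by
      intro t ht r hr
      have hev := (hγc.tendsto t).eventually (hloc _ (hγs (Ico_subset_Icc_self ht)))
      refine Eventually.frequently ?_
      filter_upwards [self_mem_nhdsWithin, nhdsWithin_le_nhds hev] with τ hτ hle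
      have hτt : 0 < τ - t := sub_pos.2 hτ
      rw [dist_lineMap_lineMap, Real.dist_eq, abs_of_pos hτt] at hle
      rw [slope_def_field, div_lt_iff₀ hτt]
      calc u (γ τ) - u (γ t) ≤ C * dist x y * (τ - t) := by linarith
        _ < r * (τ - t) := by gcongr
    have hle := image_le_of_liminf_slope_right_le_deriv_boundary
      (B := fun t => u x + C * dist x y * t)
      (hu.comp hγc.continuousOn hγs) (by simp [hγ]) (by fun_prop)
      (fun t _ => (((hasDerivAt_id t).const_mul (C * dist x y)).const_add (u x)).hasDerivWithinAt)
      (by simpa using hslope) (right_mem_Icc.2 zero_le_one)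
    simp only [Function.comp_apply, hγ, AffineMap.lineMap_apply_one, mul_one] at hle
    linarith
  intro x y hxy
  rw [Real.dist_eq, abs_sub_le_iff]
  exact ⟨dist_comm x y ▸ hone y x (segment_symm ℝ x y ▸ hxy), hone x y hxy⟩

variable {H : Eu n → Eu n → ℝ} {Ω : Set (Eu n)} {u : Eu n → ℝ} {K C : NNReal} {x : Eu n}

namespace ViscSub

-- Testing with `(C / ‖y - x‖) * ‖· - x‖ ^ 2`, whose gradient has norm at most `C` only where
-- `‖· - x‖ ≤ ‖y - x‖ / 2`.
lemma exists_halving (hv : ViscSub H Ω u) (hu : LipschitzOnWith K u Ω) (hC : 0 < C)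
    (hH : ∀ x ∈ Ω, ∀ p, H x p ≤ 0 → ‖p‖ ≤ C) {R : ℝ} (hRΩ : closedBall x R ⊆ Ω) {y : Eu n}
    (hyx : y ≠ x) (hyR : ‖y - x‖ ≤ R) (hyK : K * ‖y - x‖ < C * R) :
    ∃ z, ‖z - x‖ ≤ ‖y - x‖ / 2 ∧ u y ≤ C * ‖y - x‖ + u z := by
  have hh : 0 < ‖y - x‖ := norm_pos_iff.2 (sub_ne_zero.2 hyx)
  have hR : 0 < R := hh.trans_le hyR
  set q : ℝ := C / ‖y - x‖
  have hqh : q * ‖y - x‖ = C := div_mul_cancel₀ _ hh.ne'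
  have hq0 : 0 < q := by positivity
  have hKq : K < q * R := by
    refine lt_of_mul_lt_mul_right (a := ‖y - x‖) ?_ hh.le
    linarith [congrArg (· * R) hqh]
  have hsphere : ∀ w ∈ sphere x R, u w - q * ‖w - x‖ ^ 2 < u x - q * ‖x - x‖ ^ 2 := by
    intro w hw
    have hlip := hu.dist_le_mul w (hRΩ (sphere_subset_closedBall hw)) x
      (hRΩ (mem_closedBall_self hR.le))
    rw [mem_sphere.1 hw, Real.dist_eq] at hlip
    rw [mem_sphere_iff_norm.1 hw, sub_self, norm_zero]
    nlinarith [le_abs_self (u w - u x)]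
  have hcont : ContinuousOn (fun w => u w - q * ‖w - x‖ ^ 2) (closedBall x R) :=
    (hu.continuousOn.mono hRΩ).sub (by fun_prop)
  obtain ⟨z, hzR, hmax, hloc⟩ := exists_isMaxOn_closedBall_isLocalMax hR.le hcont hsphere
  have hzΩ : z ∈ Ω := hRΩ (ball_subset_closedBall hzR)
  have hgrad := hH z hzΩ _
    (hv _ (contDiff_const.mul (contDiff_norm_sub_sq x)) z hzΩ (hloc.on Ω))
  rw [(hasGradientAt_const_mul q (hasGradientAt_norm_sub_sq x z)).gradient, smul_smul, norm_smul,
    Real.norm_of_nonneg (by positivity)] at hgrad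
  refine ⟨z, le_of_mul_le_mul_left (a := q) (by linarith) hq0, ?_⟩
  have hyz : u y - q * ‖y - x‖ ^ 2 ≤ u z - q * ‖z - x‖ ^ 2 :=
    hmax (mem_closedBall_iff_norm.2 hyR)
  have : 0 ≤ q * ‖z - x‖ ^ 2 := by positivity
  linarith [congrArg (· * ‖y - x‖) hqh]

lemma eventually_sub_le (hv : ViscSub H Ω u) (hΩ : IsOpen Ω) (hu : LipschitzOnWith K u Ω)
    (hC : 0 < C) (hH : ∀ x ∈ Ω, ∀ p, H x p ≤ 0 → ‖p‖ ≤ C) (hx : x ∈ Ω) :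
    ∀ᶠ y in 𝓝 x, u y - u x ≤ 2 * C * dist y x := by
  obtain ⟨R, hR, hRΩ⟩ := Metric.nhds_basis_closedBall.mem_iff.1 (hΩ.mem_nhds hx)
  set r : ℝ := min R (C * R / (K + 1))
  have hrpos : 0 < r := lt_min hR (by positivity)
  filter_upwards [ball_mem_nhds x hrpos] with y hy
  refine le_two_mul_dist_of_halving (f := fun y => u y - u x) C.coe_nonneg K.coe_nonneg
    (fun y hy => ?_) (fun y hy => ?_) hy
  · have hyΩ : y ∈ Ω := hRΩ (ball_subset_closedBall (ball_subset_ball (min_le_left _ _) hy))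
    exact (le_abs_self _).trans (hu.dist_le_mul y hyΩ x hx)
  · rcases eq_or_ne y x with rfl | hyx
    · exact ⟨y, by simp⟩
    · simp only [dist_eq_norm]
      obtain ⟨hyR, hyK⟩ := lt_min_iff.1 (mem_ball_iff_norm.1 hy)
      rw [lt_div_iff₀ (by positivity)] at hyK
      obtain ⟨z, hzy, hle⟩ := hv.exists_halving hu hC hH hRΩ hyx hyR.le
        (by linarith [norm_nonneg (y - x)])
      exact ⟨z, hzy, by linarith⟩

lemma lipschitzAlongSegments (hv : ViscSub H Ω u) (hΩ : IsOpen Ω) (hu : LipschitzOnWith K u Ω)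
    (hC : 0 < C) (hH : ∀ x ∈ Ω, ∀ p, H x p ≤ 0 → ‖p‖ ≤ C) :
    LipschitzAlongSegments (2 * C) u Ω :=
  lipschitzAlongSegments_of_eventually_sub_le hu.continuousOn fun _ hx => by
    simpa using hv.eventually_sub_le hΩ hu hC hH hx

end ViscSub

end LipschitzAlongSegments

section DomainGeometry

/-- `ρ` is a `C¹` defining function of `Ω`: it describes `Ω` as a sublevel set which is regular at
the boundary, with `∇ρ` pointing outward there. -/
structure IsC1DefiningFunction {E : Type*} [NormedAddCommGroup E] [InnerProductSpace ℝ E]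
    [CompleteSpace E] (ρ : E → ℝ) (Ω : Set E) : Prop where
  contDiff : ContDiff ℝ 1 ρ
  eq_setOf : Ω = {x | ρ x < 0}
  gradient_ne_zero : ∀ x ∈ frontier Ω, gradient ρ x ≠ 0

lemma exists_bound_dist_of_isPreconnected {X : Type*} [PseudoMetricSpace X] {s : Set X}
    (hs : IsPreconnected s) {d : ℝ} (hd : 0 < d) (C : NNReal) {x y : X} (hx : x ∈ s)
    (hy : y ∈ s) :
    ∃ N, ∀ u : X → ℝ, (∀ x ∈ s, ∀ y ∈ s, dist x y < d → dist (u x) (u y) ≤ C * dist x y) →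
      dist (u x) (u y) ≤ N := by
  refine hs.induction₂
    (fun x y => ∃ N, ∀ u : X → ℝ,
      (∀ x ∈ s, ∀ y ∈ s, dist x y < d → dist (u x) (u y) ≤ C * dist x y) → dist (u x) (u y) ≤ N)
    (fun x hx => ?_) (fun x y z _ _ _ hxy hyz => ?_) (fun x y _ _ hxy => ?_) hx hy
  · filter_upwards [self_mem_nhdsWithin, nhdsWithin_le_nhds (ball_mem_nhds x hd)] with y hy hyx
    exact ⟨C * dist x y, fun u hu => hu x hx y hy (mem_ball'.1 hyx)⟩
  · obtain ⟨N, hN⟩ := hxy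
    obtain ⟨N', hN'⟩ := hyz
    exact ⟨N + N', fun u hu => (dist_triangle _ _ _).trans (add_le_add (hN u hu) (hN' u hu))⟩
  · obtain ⟨N, hN⟩ := hxy
    exact ⟨N, fun u hu => dist_comm (u x) (u y) ▸ hN u hu⟩

lemma exists_lipschitzOnWith_of_isPreconnected {X : Type*} [PseudoMetricSpace X] {s : Set X}
    (hs : IsPreconnected s) (htb : TotallyBounded s) {d : ℝ} (hd : 0 < d) (C : NNReal) :
    ∃ L : NNReal, ∀ u : X → ℝ,
      (∀ x ∈ s, ∀ y ∈ s, dist x y < d → dist (u x) (u y) ≤ C * dist x y) →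
      LipschitzOnWith L u s := by
  obtain ⟨t, hts, htfin, hcover⟩ := finite_approx_of_totallyBounded htb d hd
  choose! N hN using fun x (hx : x ∈ s) y (hy : y ∈ s) =>
    exists_bound_dist_of_isPreconnected hs hd C hx hy
  obtain ⟨B, hB⟩ := ((htfin.prod htfin).image fun q => N q.1 q.2).bddAbove
  refine ⟨max C ((C * d + B + C * d) / d).toNNReal, fun u hu => .of_dist_le_mul ?_⟩
  intro x hx y hy
  rcases lt_or_ge (dist x y) d with hlt | hge
  · refine (hu x hx y hy hlt).trans ?_
    gcongr
    exact NNReal.coe_le_coe.2 (le_max_left _ _)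
  obtain ⟨x', hx't, hxx'⟩ := mem_iUnion₂.1 (hcover hx)
  obtain ⟨y', hy't, hyy'⟩ := mem_iUnion₂.1 (hcover hy)
  have hcentres : dist (u x') (u y') ≤ B :=
    (hN x' (hts hx't) y' (hts hy't) u hu).trans
      (hB (mem_image_of_mem (fun q => N q.1 q.2) (mk_mem_prod hx't hy't)))
  have hnear : ∀ {w w'}, w ∈ s → w' ∈ s → dist w w' < d → dist (u w) (u w') ≤ C * d :=
    fun hw hw' h => (hu _ hw _ hw' h).trans (by gcongr)
  calc dist (u x) (u y) ≤ dist (u x) (u x') + dist (u x') (u y') + dist (u y') (u y) :=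
        dist_triangle4 _ _ _ _
    _ ≤ C * d + B + C * d := by
        gcongr
        · exact hnear hx (hts hx't) hxx'
        · exact hnear (hts hy't) hy (mem_ball'.1 hyy')
    _ = (C * d + B + C * d) / d * d := (div_mul_cancel₀ _ hd.ne').symm
    _ ≤ (max C ((C * d + B + C * d) / d).toNNReal : NNReal) * dist x y := by
        gcongr
        exact (Real.le_coe_toNNReal _).trans (NNReal.coe_le_coe.2 (le_max_right _ _))

variable {E : Type*} [NormedAddCommGroup E] [InnerProductSpace ℝ E]

lemma convex_setOf_norm_sub_le_inner (e x : E) (c : ℝ) (hc : 0 ≤ c) :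
    Convex ℝ {w | c * ‖w - x‖ ≤ inner ℝ e (w - x)} := by
  intro w hw w' hw' s t hs ht hst
  rw [mem_ofPred_eq] at *
  have hcomb : s • w + t • w' - x = s • (w - x) + t • (w' - x) := by
    nth_rw 1 [← one_smul ℝ x, ← hst]
    module
  calc c * ‖s • w + t • w' - x‖ ≤ c * (s * ‖w - x‖ + t * ‖w' - x‖) := by
        rw [hcomb]
        gcongr
        refine (norm_add_le _ _).trans_eq ?_
        rw [norm_smul, norm_smul, Real.norm_of_nonneg hs, Real.norm_of_nonneg ht]
    _ ≤ s * inner ℝ e (w - x) + t * inner ℝ e (w' - x) := by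
        rw [mul_add, mul_left_comm c s, mul_left_comm c t]
        gcongr
    _ = inner ℝ e (s • w + t • w' - x) := by
        rw [hcomb, inner_add_right, inner_smul_right, inner_smul_right]

variable [CompleteSpace E] {ρ : E → ℝ} {Ω : Set E} {z : E}

namespace IsC1DefiningFunction

lemma mem_iff (hρ : IsC1DefiningFunction ρ Ω) {x : E} : x ∈ Ω ↔ ρ x < 0 := by
  rw [hρ.eq_setOf, mem_ofPred_eq]

lemma isOpen (hρ : IsC1DefiningFunction ρ Ω) : IsOpen Ω :=
  hρ.eq_setOf ▸ isOpen_lt hρ.contDiff.continuous continuous_const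

lemma exists_cone_subset (hρ : IsC1DefiningFunction ρ Ω) (hz : z ∈ frontier Ω) :
    ∃ e : E, ‖e‖ = 1 ∧ ∃ r > 0, ∀ x ∈ ball z r ∩ Ω,
      ball z r ∩ {w | 1 / 2 * ‖w - x‖ ≤ inner ℝ e (w - x)} ⊆ Ω := by
  set g := gradient ρ z
  have hg0 : 0 < ‖g‖ := norm_pos_iff.2 (hρ.gradient_ne_zero z hz)
  have hstrict : HasStrictFDerivAt ρ (fderiv ℝ ρ z) z :=
    hρ.contDiff.contDiffAt.hasStrictFDerivAt one_ne_zero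
  obtain ⟨r, hr, hball⟩ := Metric.eventually_nhds_iff.1
    (hstrict.isLittleO.def (half_pos hg0))
  refine ⟨-(‖g‖⁻¹ • g), ?_, r, hr, ?_⟩
  · rw [norm_neg, norm_smul, norm_inv, norm_norm, inv_mul_cancel₀ hg0.ne']
  rintro x ⟨hxr, hxΩ⟩ w ⟨hwr, hw⟩
  have hlin : ρ w - ρ x - inner ℝ g (w - x) ≤ ‖g‖ / 2 * ‖w - x‖ := by
    have := @hball (w, x) (max_lt hwr hxr)
    rw [← inner_gradient_left] at this
    exact (le_abs_self _).trans this
  have hcone : ‖g‖ * (1 / 2 * ‖w - x‖) ≤ -inner ℝ g (w - x) := by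
    rw [mem_ofPred_eq, inner_neg_left, real_inner_smul_left] at hw
    calc ‖g‖ * (1 / 2 * ‖w - x‖) ≤ ‖g‖ * -(‖g‖⁻¹ * inner ℝ g (w - x)) := by gcongr
      _ = -inner ℝ g (w - x) := by field_simp
  rw [hρ.mem_iff] at hxΩ ⊢
  linarith

-- Two points near the boundary are joined by pushing both inwards along the axis of the cone, by
-- three times their distance, and moving across there.
lemma exists_segments_subset (hρ : IsC1DefiningFunction ρ Ω) (hz : z ∈ frontier Ω) :
    ∃ r > 0, ∀ x ∈ ball z r ∩ Ω, ∀ y ∈ ball z r ∩ Ω, ∃ v, ‖v‖ = 3 * dist x y ∧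
      segment ℝ x (x + v) ⊆ Ω ∧ segment ℝ (x + v) (y + v) ⊆ Ω ∧ segment ℝ y (y + v) ⊆ Ω := by
  obtain ⟨e, he, r, hr, hcone⟩ := hρ.exists_cone_subset hz
  refine ⟨r / 9, by positivity, fun x ⟨hxr, hx⟩ y ⟨hyr, hy⟩ => ?_⟩
  set h := dist x y with hh
  have hh0 : 0 ≤ h := dist_nonneg
  have hyx : ‖y - x‖ = h := by rw [← dist_eq_norm, dist_comm]
  set v : E := (3 * h) • e with hv
  have hvnorm : ‖v‖ = 3 * h := by
    rw [hv, norm_smul, he, mul_one, Real.norm_of_nonneg (by positivity)]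
  have hve : inner ℝ e v = 3 * h := by
    rw [hv, inner_smul_right, real_inner_self_eq_norm_sq, he]
    ring
  have hball : ball z (r / 9) ⊆ ball z r := ball_subset_ball (by linarith)
  have hpushball : ∀ w ∈ ball z (r / 9), w + v ∈ ball z r := by
    intro w hw
    rw [mem_ball] at hw hxr hyr ⊢
    have := dist_triangle (w + v) w z
    rw [dist_self_add_left, hvnorm] at this
    linarith [dist_triangle_right x y z]
  have hsegment : ∀ x ∈ ball z (r / 9) ∩ Ω, ∀ w ∈ ball z r, ∀ w' ∈ ball z r,
      1 / 2 * ‖w - x‖ ≤ inner ℝ e (w - x) → 1 / 2 * ‖w' - x‖ ≤ inner ℝ e (w' - x) →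
      segment ℝ w w' ⊆ Ω := fun x hx w hw w' hw' hwx hwx' =>
    (((convex_ball z r).inter (convex_setOf_norm_sub_le_inner e x (1 / 2) (by norm_num))
      ).segment_subset ⟨hw, hwx⟩ ⟨hw', hwx'⟩).trans (hcone x ⟨hball hx.1, hx.2⟩)
  have hpush : ∀ w ∈ ball z (r / 9) ∩ Ω, segment ℝ w (w + v) ⊆ Ω := fun w hw =>
    hsegment w hw w (hball hw.1) _ (hpushball w hw.1) (by simp)
      (by rw [add_sub_cancel_left, hve, hvnorm]; linarith)
  have hacross : segment ℝ (x + v) (y + v) ⊆ Ω := by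
    refine hsegment x ⟨hxr, hx⟩ _ (hpushball x hxr) _ (hpushball y hyr)
      (by rw [add_sub_cancel_left, hve, hvnorm]; linarith) ?_
    have hinner := (abs_le.1 (abs_real_inner_le_norm e (y - x))).1
    rw [he, hyx] at hinner
    have hnorm := norm_add_le (y - x) v
    rw [add_sub_right_comm, inner_add_right, hve]
    linarith
  exact ⟨v, hvnorm, hpush x ⟨hxr, hx⟩, hacross, hpush y ⟨hyr, hy⟩⟩

lemma exists_lipschitzOnWith_ball_of_mem_frontier (hρ : IsC1DefiningFunction ρ Ω)
    (hz : z ∈ frontier Ω) :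
    ∃ r > 0, ∀ (C : NNReal) (u : E → ℝ), LipschitzAlongSegments C u Ω →
      LipschitzOnWith (7 * C) u (ball z r ∩ Ω) := by
  obtain ⟨r, hr, hsegments⟩ := hρ.exists_segments_subset hz
  refine ⟨r, hr, fun C u hu => .of_dist_le_mul fun x hx y hy => ?_⟩
  obtain ⟨v, hvnorm, hxv, hacross, hyv⟩ := hsegments x hx y hy
  have h₁ := hu hxv
  have h₂ := hu hacross
  have h₃ := hu hyv
  rw [dist_self_add_right, hvnorm] at h₁ h₃
  rw [dist_add_right] at h₂
  rw [dist_comm] at h₃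
  refine (dist_triangle4 _ _ _ _).trans ((add_le_add (add_le_add h₁ h₂) h₃).trans_eq ?_)
  push_cast
  ring

lemma exists_lipschitzOnWith_ball (hρ : IsC1DefiningFunction ρ Ω) (hz : z ∈ closure Ω) :
    ∃ r > 0, ∀ (C : NNReal) (u : E → ℝ), LipschitzAlongSegments C u Ω →
      LipschitzOnWith (7 * C) u (ball z r ∩ Ω) := by
  by_cases hzΩ : z ∈ Ω
  · obtain ⟨r, hr, hball⟩ := Metric.isOpen_iff.1 hρ.isOpen z hzΩ
    refine ⟨r, hr, fun C u hu => LipschitzOnWith.weaken (K := C) (.of_dist_le_mul ?_)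
      (le_mul_of_one_le_left' (by norm_num))⟩
    intro x hx y hy
    exact hu (((convex_ball z r).segment_subset hx.1 hy.1).trans hball)
  · exact hρ.exists_lipschitzOnWith_ball_of_mem_frontier
      (hρ.isOpen.frontier_eq ▸ ⟨hz, hzΩ⟩)

lemma exists_lipschitzOnWith [ProperSpace E] (hρ : IsC1DefiningFunction ρ Ω)
    (hbd : Bornology.IsBounded Ω) (hconn : IsPreconnected Ω) (C : NNReal) :
    ∃ L : NNReal, ∀ u : E → ℝ, LipschitzAlongSegments C u Ω → LipschitzOnWith L u Ω := by
  choose! r hr hloc using fun z (hz : z ∈ closure Ω) => hρ.exists_lipschitzOnWith_ball hz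
  obtain ⟨d, hd, hleb⟩ := lebesgue_number_lemma_of_metric
    (c := fun z : closure Ω => ball (z : E) (r z)) hbd.isCompact_closure (fun _ => isOpen_ball)
    fun z hz => mem_iUnion.2 ⟨⟨z, hz⟩, mem_ball_self (hr z hz)⟩
  obtain ⟨L, hL⟩ := exists_lipschitzOnWith_of_isPreconnected hconn
    (hbd.isCompact_closure.totallyBounded.subset subset_closure) hd (7 * C)
  refine ⟨L, fun u hu => hL u fun x hx y hy hxy => ?_⟩
  obtain ⟨z, hz⟩ := hleb x (subset_closure hx)
  exact (hloc z z.2 C u hu).dist_le_mul x ⟨hz (mem_ball_self hd), hx⟩ y ⟨hz (mem_ball'.2 hxy), hy⟩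

end IsC1DefiningFunction

end DomainGeometry

section InwardFlow

lemma exists_first_exit {X : Type*} [TopologicalSpace X] {Ω : Set X} (hΩ : IsOpen Ω) {γ : ℝ → X}
    (hγ : Continuous γ) {T : ℝ} (hT : 0 ≤ T) (h0 : γ 0 ∈ Ω) (hTΩ : γ T ∉ Ω) :
    ∃ s > 0, γ s ∈ frontier Ω ∧ ∀ t ∈ Ico 0 s, γ t ∈ Ω := by
  set S : Set ℝ := Ici 0 ∩ γ ⁻¹' Ωᶜ
  have hbdd : BddBelow S := ⟨0, fun _ ht => ht.1⟩
  obtain ⟨hs0, hsΩ⟩ : sInf S ∈ S :=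
    (isClosed_Ici.inter (hΩ.isClosed_compl.preimage hγ)).csInf_mem ⟨T, hT, hTΩ⟩ hbdd
  have hspos : 0 < sInf S := lt_of_le_of_ne hs0 fun h => hsΩ (h ▸ h0)
  have hbefore : ∀ t ∈ Ico 0 (sInf S), γ t ∈ Ω := fun t ht =>
    not_not.1 fun h => (csInf_le hbdd ⟨ht.1, h⟩).not_gt ht.2
  refine ⟨sInf S, hspos, hΩ.frontier_eq ▸ ⟨?_, hsΩ⟩, hbefore⟩
  refine mem_closure_of_tendsto (b := 𝓝[<] sInf S)
    (hγ.continuousAt.mono_left nhdsWithin_le_nhds) ?_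
  filter_upwards [Ioo_mem_nhdsLT hspos] with t ht using hbefore t ⟨ht.1.le, ht.2⟩

variable {E : Type*} [NormedAddCommGroup E] [InnerProductSpace ℝ E] [CompleteSpace E]
  {ρ : E → ℝ} {Ω : Set E} {b : E → E}

namespace IsC1DefiningFunction

lemma mem_of_inward_flow (hρ : IsC1DefiningFunction ρ Ω)
    (hin : ∀ x ∈ frontier Ω, inner ℝ (b x) (gradient ρ x) < 0) {γ : ℝ → E}
    (hγ : ∀ t, HasDerivAt γ (b (γ t)) t) (h0 : γ 0 ∈ Ω) {T : ℝ} (hT : 0 ≤ T) : γ T ∈ Ω := by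
  by_contra hTΩ
  have hcont : Continuous γ := continuous_iff_continuousAt.2 fun t => (hγ t).continuousAt
  obtain ⟨s, hs, hfr, hbefore⟩ := exists_first_exit hρ.isOpen hcont hT h0 hTΩ
  have hderiv : HasDerivAt (ρ ∘ γ) (inner ℝ (gradient ρ (γ s)) (b (γ s))) s := by
    simpa using (hasGradientAt_of_contDiff hρ.contDiff (γ s)).hasFDerivAt.comp_hasDerivAt s (hγ s)
  have hslope := (hasDerivAt_iff_tendsto_slope.1 hderiv).mono_left
    (nhdsWithin_mono s (show Iio s ⊆ {s}ᶜ from fun t ht => ne_of_lt ht))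
  have hnonneg : 0 ≤ inner ℝ (gradient ρ (γ s)) (b (γ s)) := by
    refine ge_of_tendsto hslope ?_
    filter_upwards [Ioo_mem_nhdsLT hs] with t ht
    have ht' : ρ (γ t) < 0 := hρ.mem_iff.1 (hbefore t ⟨ht.1.le, ht.2⟩)
    have hs' : 0 ≤ ρ (γ s) := not_lt.1 fun h =>
      (hρ.isOpen.frontier_eq ▸ hfr : γ s ∈ closure Ω \ Ω).2 (hρ.mem_iff.2 h)
    rw [slope_def_field]
    exact div_nonneg_of_nonpos (sub_nonpos.2 (ht'.le.trans hs')) (sub_nonpos.2 ht.2.le)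
  rw [real_inner_comm] at hnonneg
  exact hnonneg.not_gt (hin _ hfr)

lemma isPreconnected_of_inward_flow (hρ : IsC1DefiningFunction ρ Ω)
    (hin : ∀ x ∈ frontier Ω, inner ℝ (b x) (gradient ρ x) < 0) {z : E} (hz : z ∈ Ω)
    (hflow : ∀ x ∈ Ω, ∃ γ : ℝ → E, γ 0 = x ∧ (∀ t, HasDerivAt γ (b (γ t)) t) ∧
      Tendsto γ atTop (𝓝 z)) : IsPreconnected Ω := by
  obtain ⟨r, hr, hball⟩ := Metric.isOpen_iff.1 hρ.isOpen z hz
  refine isPreconnected_of_forall z fun x hx => ?_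
  obtain ⟨γ, rfl, hγ, hlim⟩ := hflow x hx
  obtain ⟨T, hTr, hT⟩ :=
    ((hlim.eventually (ball_mem_nhds z hr)).and (eventually_ge_atTop 0)).exists
  have hcont : Continuous γ := continuous_iff_continuousAt.2 fun t => (hγ t).continuousAt
  refine ⟨γ '' Icc 0 T ∪ ball z r, union_subset ?_ hball, .inr (mem_ball_self hr),
    .inl ⟨0, left_mem_Icc.2 hT, rfl⟩, ?_⟩
  · rintro _ ⟨t, ht, rfl⟩
    exact hρ.mem_of_inward_flow hin hγ hx ht.1
  · exact IsPreconnected.union (γ T) ⟨T, right_mem_Icc.2 hT, rfl⟩ hTr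
      (isPreconnected_Icc.image _ hcont.continuousOn) (convex_ball z r).isPreconnected

end IsC1DefiningFunction

end InwardFlow

section QuasiPotential

/-- The competitors in the definition of the quasi-potential `Vq α b Ω`. -/
structure IsAdmissible (α : Eu n → Matrix (Fin n) (Fin n) ℝ) (b : Eu n → Eu n) (Ω : Set (Eu n))
    (u : Eu n → ℝ) : Prop where
  lipschitzOnWith : ∃ K : NNReal, LipschitzOnWith K u (closure Ω)
  map_zero : u 0 = 0
  viscSub : ViscSub (Ham α b) Ω u

/-- All competitors for `Vq α b Ω` share the Lipschitz constant `L`. -/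
def EquiLipschitz (L : NNReal) (α : Eu n → Matrix (Fin n) (Fin n) ℝ) (b : Eu n → Eu n)
    (Ω : Set (Eu n)) : Prop :=
  ∀ u, IsAdmissible α b Ω u → LipschitzOnWith L u (closure Ω)

lemma viscSub_of_contDiff {H : Eu n → Eu n → ℝ} {Ω : Set (Eu n)} (hΩ : IsOpen Ω)
    {u : Eu n → ℝ} (hu : ContDiff ℝ 1 u) (hH : ∀ x ∈ Ω, H x (gradient u x) ≤ 0) :
    ViscSub H Ω u := by
  intro φ hφ x hx hmax
  rw [gradient_eq_of_isLocalMax_sub (hasGradientAt_of_contDiff hu x)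
    (hasGradientAt_of_contDiff hφ x) (hmax.isLocalMax (hΩ.mem_nhds hx))]
  exact hH x hx

lemma exists_equiLipschitz {ρ : Eu n → ℝ} {Ω : Set (Eu n)} (hρ : IsC1DefiningFunction ρ Ω)
    (hbd : Bornology.IsBounded Ω) (hconn : IsPreconnected Ω) {b : Eu n → Eu n}
    (hb : Continuous b) {θ : ℝ} (hθ : 0 < θ) :
    ∃ L : NNReal, ∀ α : Eu n → Matrix (Fin n) (Fin n) ℝ,
      (∀ x ∈ Ω, ∀ p, θ * ‖p‖ ^ 2 ≤ mquad (α x) p) → EquiLipschitz L α b Ω := by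
  obtain ⟨B, hB⟩ := hbd.isCompact_closure.exists_bound_of_continuousOn hb.continuousOn
  set C : NNReal := ⟨(|B| + 1) / θ, by positivity⟩
  have hC : 0 < C := by rw [← NNReal.coe_pos]; change 0 < (|B| + 1) / θ; positivity
  obtain ⟨L, hL⟩ := hρ.exists_lipschitzOnWith hbd hconn (2 * C)
  refine ⟨L, fun α hα u hu => ?_⟩
  obtain ⟨K, hK⟩ := hu.lipschitzOnWith
  refine (lipschitzOnWith_closure_iff hK.continuousOn).2 (hL u ?_)
  refine hu.viscSub.lipschitzAlongSegments hρ.isOpen (hK.mono subset_closure) hC ?_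
  intro x hx p hp
  have hbx : ‖b x‖ ≤ |B| + 1 := by linarith [hB x (subset_closure hx), le_abs_self B]
  exact norm_le_div_of_Ham_nonpos hθ (hα x hx p) hbx hp

variable {α : Eu n → Matrix (Fin n) (Fin n) ℝ} {b : Eu n → Eu n} {Ω : Set (Eu n)} {L : NNReal}
  {x : Eu n}

lemma isAdmissible_zero (hΩ : IsOpen Ω) : IsAdmissible α b Ω 0 where
  lipschitzOnWith := ⟨0, (LipschitzWith.const 0).lipschitzOnWith⟩
  map_zero := rfl
  viscSub := viscSub_of_contDiff hΩ contDiff_const fun x _ => by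
    rw [show gradient (0 : Eu n → ℝ) x = 0 from (hasGradientAt_const x (0 : ℝ)).gradient, Ham_zero]

lemma le_Vq (hL : EquiLipschitz L α b Ω) (h0 : (0 : Eu n) ∈ Ω) (hx : x ∈ closure Ω)
    {u : Eu n → ℝ} (hu : IsAdmissible α b Ω u) : u x ≤ Vq α b Ω x := by
  refine le_csSup ⟨L * ‖x‖, ?_⟩ ⟨u, hu.1, hu.2, hu.3, rfl⟩
  rintro _ ⟨w, hlip, hw0, hvisc, rfl⟩
  have hdist := (hL w ⟨hlip, hw0, hvisc⟩).dist_le_mul x hx 0 (subset_closure h0)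
  rw [Real.dist_eq, hw0, sub_zero, dist_zero_right] at hdist
  exact (le_abs_self _).trans hdist

lemma Vq_le (hΩ : IsOpen Ω) {c : ℝ} (h : ∀ u, IsAdmissible α b Ω u → u x ≤ c) :
    Vq α b Ω x ≤ c := by
  have hzero : IsAdmissible α b Ω 0 := isAdmissible_zero hΩ
  refine csSup_le ⟨0, 0, hzero.1, rfl, hzero.3, rfl⟩ ?_
  rintro _ ⟨u, hlip, hu0, hvisc, rfl⟩
  exact h u ⟨hlip, hu0, hvisc⟩

lemma exists_isAdmissible_lt (hΩ : IsOpen Ω) {c : ℝ} (h : c < Vq α b Ω x) :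
    ∃ u, IsAdmissible α b Ω u ∧ c < u x := by
  by_contra! hle
  exact (Vq_le hΩ hle).not_gt h

lemma Vq_nonneg (hL : EquiLipschitz L α b Ω) (hΩ : IsOpen Ω) (h0 : (0 : Eu n) ∈ Ω)
    (hx : x ∈ closure Ω) : 0 ≤ Vq α b Ω x :=
  le_Vq hL h0 hx (isAdmissible_zero hΩ)

lemma Vq_zero (hL : EquiLipschitz L α b Ω) (hΩ : IsOpen Ω) (h0 : (0 : Eu n) ∈ Ω) :
    Vq α b Ω 0 = 0 :=
  le_antisymm (Vq_le hΩ fun _ hu => hu.map_zero.le) (Vq_nonneg hL hΩ h0 (subset_closure h0))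

lemma lipschitzOnWith_Vq (hL : EquiLipschitz L α b Ω) (hΩ : IsOpen Ω) (h0 : (0 : Eu n) ∈ Ω) :
    LipschitzOnWith L (Vq α b Ω) (closure Ω) :=
  LipschitzOnWith.of_le_add_mul L fun x hx y hy => Vq_le hΩ fun u hu => by
    linarith [le_Vq hL h0 hy hu, le_abs_self (u x - u y), (hL u hu).dist_le_mul x hx y hy,
      Real.dist_eq (u x) (u y)]

end QuasiPotential

section Stability

lemma eventually_forall_mem_of_isCompact {ι X : Type*} [TopologicalSpace X] {l : Filter ι}
    {K : Set X} (hK : IsCompact K) {P : ι → X → Prop}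
    (hP : ∀ x ∈ K, ∀ᶠ q : ι × X in l ×ˢ 𝓝 x, P q.1 q.2) : ∀ᶠ i in l, ∀ x ∈ K, P i x := by
  simp only [← eventually_iSup, ← hK.prod_nhdsSet_eq_biSup] at hP
  exact hP.curry.mono fun _ h => h.self_of_nhdsSet

lemma eventually_lt_add_of_lipschitzOnWith {ι X : Type*} [PseudoMetricSpace X] {l : Filter ι}
    {Ω : Set X} (hΩ : IsOpen Ω) {u : ι → X → ℝ} {W : X → ℝ} {L : NNReal}
    (hu : ∀ᶠ i in l, LipschitzOnWith L (u i) Ω) (hW : LipschitzOnWith L W Ω) {x : X} (hx : x ∈ Ω)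
    (h : ∀ ε > 0, ∀ᶠ i in l, u i x < W x + ε) {ε : ℝ} (hε : 0 < ε) :
    ∀ᶠ q : ι × X in l ×ˢ 𝓝 x, u q.1 q.2 < W q.2 + ε := by
  have hclose : ∀ᶠ y in 𝓝 x, 2 * L * dist y x < ε / 2 := by
    have hlim : Tendsto (fun y => 2 * L * dist y x) (𝓝 x) (𝓝 (2 * L * dist x x)) :=
      Continuous.tendsto (by fun_prop) x
    exact hlim.eventually_lt_const (by rw [dist_self]; linarith)
  filter_upwards [((h (ε / 2) (half_pos hε)).and hu).prod_mk (hclose.and (hΩ.mem_nhds hx))]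
    with ⟨i, y⟩ ⟨⟨hux, hlip⟩, hyx, hy⟩
  have huy := (le_abs_self _).trans (hlip.dist_le_mul y hy x hx)
  have hWy := (le_abs_self _).trans (hW.dist_le_mul x hx y hy)
  rw [dist_comm x y] at hWy
  linarith

/- The penalisation `‖· - x‖ ^ 2` makes the maximum of `W - φ` at `x` strict, so that it is
inherited by the approximations `u i`. -/
lemma eventually_exists_isLocalMax_sub {ι E : Type*} [NormedAddCommGroup E] [ProperSpace E]
    {l : Filter ι} {u : ι → E → ℝ} {W φ : E → ℝ} {x : E} {r : ℝ} (hr : 0 < r)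
    (hu : ∀ᶠ i in l, ContinuousOn (u i) (closedBall x r)) (hφ : Continuous φ)
    (hlow : ∀ ε > 0, ∀ᶠ i in l, W x - ε < u i x)
    (hup : ∀ ε > 0, ∀ᶠ i in l, ∀ y ∈ sphere x r, u i y < W y + ε)
    (hmax : ∀ y ∈ closedBall x r, W y - φ y ≤ W x - φ x) :
    ∀ᶠ i in l, ∃ y ∈ ball x r, IsLocalMax (fun w => u i w - (φ w + ‖w - x‖ ^ 2)) y := by
  have hr2 : 0 < r ^ 2 / 2 := by positivity
  filter_upwards [hu, hlow _ hr2, hup _ hr2] with i hcont hxi hyi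
  obtain ⟨y, hy, -, hloc⟩ := exists_isMaxOn_closedBall_isLocalMax hr.le
    (f := fun w => u i w - (φ w + ‖w - x‖ ^ 2))
    (hcont.sub (by fun_prop : Continuous fun w => φ w + ‖w - x‖ ^ 2).continuousOn) fun y hy => by
      simp only [sub_self, norm_zero, mem_sphere_iff_norm.1 hy]
      linarith [hyi y hy, hmax y (sphere_subset_closedBall hy)]
  exact ⟨y, hy, hloc⟩

variable {ι : Type*} {l : Filter ι} {Ω : Set (Eu n)} {x : Eu n}

lemma nonpos_of_isLocalMaxOn_of_viscSub [NeBot l] (hΩ : IsOpen Ω) (hx : x ∈ Ω)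
    {Hs : ι → Eu n → Eu n → ℝ} {H : Eu n → Eu n → ℝ}
    (hH : ∀ p, 0 < H x p → ∀ᶠ q : ι × Eu n × Eu n in l ×ˢ 𝓝 (x, p), 0 < Hs q.1 q.2.1 q.2.2)
    {u : ι → Eu n → ℝ} (hcont : ∀ᶠ i in l, ContinuousOn (u i) Ω)
    (hvisc : ∀ᶠ i in l, ViscSub (Hs i) Ω (u i)) {W : Eu n → ℝ}
    (hlow : ∀ ε > 0, ∀ᶠ i in l, W x - ε < u i x)
    (hup : ∀ y ∈ Ω, ∀ ε > 0, ∀ᶠ q : ι × Eu n in l ×ˢ 𝓝 y, u q.1 q.2 < W q.2 + ε)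
    {φ : Eu n → ℝ} (hφ : ContDiff ℝ 1 φ) (hmax : IsLocalMaxOn (fun y => W y - φ y) Ω x) :
    H x (gradient φ x) ≤ 0 := by
  by_contra! hpos
  set G : Eu n → Eu n := fun y => gradient φ y + (2 : ℝ) • (y - x) with hG
  have hGcont : Continuous fun y => (y, G y) :=
    continuous_id.prodMk ((continuous_gradient_of_contDiff hφ).add (by fun_prop))
  have hGx : Tendsto (fun y => (y, G y)) (𝓝 x) (𝓝 (x, gradient φ x)) := by
    simpa [hG] using hGcont.tendsto x
  obtain ⟨I, hI, U, hU, hIU⟩ := eventually_prod_iff.1 (hH _ hpos)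
  obtain ⟨r, hr, hball⟩ := nhds_basis_closedBall.eventually_iff.1
    ((hGx.eventually hU).and ((hmax.isLocalMax (hΩ.mem_nhds hx)).and (hΩ.mem_nhds hx)))
  have hlocal := eventually_exists_isLocalMax_sub hr
    (hcont.mono fun i hi => hi.mono fun y hy => (hball hy).2.2) hφ.continuous hlow
    (fun ε hε => eventually_forall_mem_of_isCompact (isCompact_sphere x r) fun y hy =>
      hup y (hball (sphere_subset_closedBall hy)).2.2 ε hε) fun y hy => (hball hy).2.1
  obtain ⟨i, ⟨y, hy, hloc⟩, hvi, hIi⟩ := (hlocal.and (hvisc.and hI)).exists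
  have hyr := hball (ball_subset_closedBall hy)
  have hle := hvi _ (hφ.add (contDiff_norm_sub_sq x)) y hyr.2.2 (hloc.on Ω)
  rw [(hasGradientAt_add (hasGradientAt_of_contDiff hφ y)
    (hasGradientAt_norm_sub_sq x y)).gradient] at hle
  exact hle.not_gt (hIU hIi hyr.1)

variable {α : Eu n → Matrix (Fin n) (Fin n) ℝ} {b : Eu n → Eu n} {L : NNReal}

lemma isAdmissible_Vq (hΩ : IsOpen Ω) (h0 : (0 : Eu n) ∈ Ω) (hα : ContinuousOn α Ω)
    (hb : Continuous b) (hL : EquiLipschitz L α b Ω) : IsAdmissible α b Ω (Vq α b Ω) := by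
  refine ⟨⟨L, lipschitzOnWith_Vq hL hΩ h0⟩, Vq_zero hL hΩ h0, fun φ hφ x hx hmax => ?_⟩
  choose u hu hux using fun k : ℕ =>
    exists_isAdmissible_lt hΩ (sub_lt_self (Vq α b Ω x) (Nat.one_div_pos_of_nat (n := k)))
  refine nonpos_of_isLocalMaxOn_of_viscSub (l := atTop) (u := u) hΩ hx
    (Hs := fun _ => Ham α b) (fun p hp => ?_)
    (.of_forall fun k => (hL _ (hu k)).continuousOn.mono subset_closure)
    (.of_forall fun k => (hu k).viscSub) (fun ε hε => ?_) (fun y hy ε hε => ?_) hφ hmax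
  · exact ((continuousAt_Ham (hα.continuousAt (hΩ.mem_nhds hx)) hb.continuousAt p).eventually
      (lt_mem_nhds hp)).prod_inr _
  · filter_upwards [(tendsto_one_div_add_atTop_nhds_zero_nat (𝕜 := ℝ)).eventually_lt_const hε]
      with k hk
    linarith [hux k]
  · filter_upwards [Eventually.prod_inr (hΩ.mem_nhds hy) _] with ⟨k, z⟩ hz
    linarith [le_Vq hL h0 (subset_closure hz) (hu k)]

/-- Locally uniform convergence in `Ω` of the quadratic forms of the coefficient fields `αs i`
to that of `α` along `l`. -/
def TendstoLocallyInForm (αs : ι → Eu n → Matrix (Fin n) (Fin n) ℝ)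
    (α : Eu n → Matrix (Fin n) (Fin n) ℝ) (l : Filter ι) (Ω : Set (Eu n)) : Prop :=
  ∀ K ⊆ Ω, IsCompact K → ∀ η > 0, ∀ᶠ i in l, ∀ x ∈ K, ∀ p : Eu n,
    |mquad (αs i x) p - mquad (α x) p| ≤ η * ‖p‖ ^ 2

variable {αs : ι → Eu n → Matrix (Fin n) (Fin n) ℝ}

lemma TendstoLocallyInForm.mono {l' : Filter ι} (h : TendstoLocallyInForm αs α l Ω) (hl : l' ≤ l) :
    TendstoLocallyInForm αs α l' Ω :=
  fun K hK hKc η hη => hl (h K hK hKc η hη)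

lemma TendstoLocallyInForm.comp {κ : Type*} {l' : Filter κ} {f : κ → ι}
    (h : TendstoLocallyInForm αs α l Ω) (hf : Tendsto f l' l) :
    TendstoLocallyInForm (fun k => αs (f k)) α l' Ω :=
  fun K hK hKc η hη => hf.eventually (h K hK hKc η hη)

lemma TendstoLocallyInForm.eventually_Ham_pos (h : TendstoLocallyInForm αs α l Ω) (hΩ : IsOpen Ω)
    (hα : ContinuousOn α Ω) (hb : Continuous b) (hx : x ∈ Ω) {p : Eu n} (hp : 0 < Ham α b x p) :
    ∀ᶠ q : ι × Eu n × Eu n in l ×ˢ 𝓝 (x, p), 0 < Ham (αs q.1) b q.2.1 q.2.2 := by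
  obtain ⟨r, hr, hball⟩ := nhds_basis_closedBall.mem_iff.1 (hΩ.mem_nhds hx)
  set h₀ := Ham α b x p
  set η := h₀ / (2 * (‖p‖ + 1) ^ 2) with hη
  have hHam : ∀ᶠ q : Eu n × Eu n in 𝓝 (x, p), h₀ / 2 < Ham α b q.1 q.2 :=
    (continuousAt_Ham (hα.continuousAt (hΩ.mem_nhds hx)) hb.continuousAt p).eventually_const_lt
      (half_lt_self hp)
  have hnear : ∀ᶠ q : Eu n × Eu n in 𝓝 (x, p), q.1 ∈ closedBall x r ∧ ‖q.2‖ < ‖p‖ + 1 :=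
    (continuousAt_fst.eventually_mem (closedBall_mem_nhds x hr)).and
      (continuousAt_snd.norm.eventually_lt_const (lt_add_one ‖p‖))
  filter_upwards [(h _ hball (isCompact_closedBall x r) η (by positivity)).prod_mk (hHam.and hnear)]
    with ⟨i, y, q⟩ ⟨hi, hpos, hy, hq⟩
  have hclose := (abs_le.1 (hi y hy q)).1
  have hsmall : η * ‖q‖ ^ 2 ≤ h₀ / 2 := by
    calc η * ‖q‖ ^ 2 ≤ η * (‖p‖ + 1) ^ 2 := by gcongr
      _ = h₀ / 2 := by rw [hη]; field_simp
  simp only [Ham] at hpos ⊢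
  linarith

lemma exists_tendsto_of_ultrafilter {X : Type*} [PseudoMetricSpace X] (U : Ultrafilter ι)
    {s : Set X} {u : ι → X → ℝ} {x₀ : X} (hx₀ : x₀ ∈ s) (h₀ : ∀ᶠ i in U, u i x₀ = 0)
    (hu : ∀ᶠ i in U, LipschitzOnWith L (u i) s) :
    ∃ W : X → ℝ, LipschitzOnWith L W s ∧ ∀ x ∈ s, Tendsto (fun i => u i x) U (𝓝 (W x)) := by
  have hlim : ∀ x ∈ s, ∃ w : ℝ, Tendsto (fun i => u i x) U (𝓝 w) := fun x hx => by
    have hmem : ∀ᶠ i in U, u i x ∈ closedBall 0 (L * dist x x₀) := by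
      filter_upwards [h₀, hu] with i h0 hlip
      simpa [h0] using hlip.dist_le_mul x hx x₀ hx₀
    obtain ⟨w, -, hw⟩ := (isCompact_closedBall (0 : ℝ) _).ultrafilter_le_nhds
      (U.map fun i => u i x) (le_principal_iff.2 hmem)
    exact ⟨w, hw⟩
  choose! W hW using hlim
  refine ⟨W, LipschitzOnWith.of_dist_le_mul fun x hx y hy => ?_, hW⟩
  exact le_of_tendsto ((hW x hx).dist (hW y hy)) (hu.mono fun i h => h.dist_le_mul x hx y hy)

lemma exists_isAdmissible_tendsto (U : Ultrafilter ι) (hΩ : IsOpen Ω) (h0 : (0 : Eu n) ∈ Ω)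
    (hα : ContinuousOn α Ω) (hb : Continuous b) (h : TendstoLocallyInForm αs α U Ω)
    {u : ι → Eu n → ℝ} (hu : ∀ᶠ i in U, IsAdmissible (αs i) b Ω (u i))
    (hlip : ∀ᶠ i in U, LipschitzOnWith L (u i) (closure Ω)) :
    ∃ W, IsAdmissible α b Ω W ∧ ∀ x ∈ closure Ω, Tendsto (fun i => u i x) U (𝓝 (W x)) := by
  have h0' : (0 : Eu n) ∈ closure Ω := subset_closure h0
  obtain ⟨W, hWlip, hW⟩ :=
    exists_tendsto_of_ultrafilter U h0' (hu.mono fun i hi => hi.map_zero) hlip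
  have hW0 : W 0 = 0 := tendsto_nhds_unique (hW 0 h0')
    (tendsto_const_nhds.congr' (hu.mono fun i hi => hi.map_zero.symm))
  have hlipΩ : ∀ᶠ i in U, LipschitzOnWith L (u i) Ω := hlip.mono fun i hi => hi.mono subset_closure
  refine ⟨W, ⟨⟨L, hWlip⟩, hW0, fun φ hφ x hx hmax => ?_⟩, hW⟩
  refine nonpos_of_isLocalMaxOn_of_viscSub hΩ hx
    (fun p hp => h.eventually_Ham_pos hΩ hα hb hx hp) (hlipΩ.mono fun i hi => hi.continuousOn)
    (hu.mono fun i hi => hi.viscSub)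
    (fun ε hε => (hW x (subset_closure hx)).eventually_const_lt (sub_lt_self _ hε))
    (fun y hy ε hε => ?_) hφ hmax
  exact eventually_lt_add_of_lipschitzOnWith hΩ hlipΩ (hWlip.mono subset_closure) hy
    (fun η hη => (hW y (subset_closure hy)).eventually_lt_const (lt_add_of_pos_right _ hη)) hε

lemma TendstoLocallyInForm.eventually_Vq_le (h : TendstoLocallyInForm αs α l Ω) (hΩ : IsOpen Ω)
    (h0 : (0 : Eu n) ∈ Ω) (hα : ContinuousOn α Ω) (hb : Continuous b)
    (hL : EquiLipschitz L α b Ω) (hLs : ∀ᶠ i in l, EquiLipschitz L (αs i) b Ω)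
    (hx : x ∈ closure Ω) {c : ℝ} (hc : Vq α b Ω x < c) : ∀ᶠ i in l, Vq (αs i) b Ω x ≤ c := by
  refine mem_iff_ultrafilter.2 fun U hU => ?_
  by_contra hcon
  have hgt : ∀ᶠ i in U, c < Vq (αs i) b Ω x :=
    (Ultrafilter.eventually_not.2 hcon).mono fun i hi => not_le.1 hi
  choose! u hu hcu using fun i (hi : c < Vq (αs i) b Ω x) => exists_isAdmissible_lt hΩ hi
  have hadm : ∀ᶠ i in U, IsAdmissible (αs i) b Ω (u i) := hgt.mono hu
  have hlip : ∀ᶠ i in U, LipschitzOnWith L (u i) (closure Ω) := by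
    filter_upwards [hadm, hU hLs] with i hi hLi using hLi _ hi
  obtain ⟨W, hWadm, hW⟩ := exists_isAdmissible_tendsto U hΩ h0 hα hb (h.mono hU) hadm hlip
  have hcW : c ≤ W x := ge_of_tendsto (hW x hx) (hgt.mono fun i hi => (hcu i hi).le)
  exact (hcW.trans (le_Vq hL h0 hx hWadm)).not_gt hc

end Stability

section SmoothTruncation

lemma add_two_mul_le_max_zero_sq (s t : ℝ) :
    max t 0 ^ 2 + 2 * max t 0 * (s - t) ≤ max s 0 ^ 2 := by
  rcases le_total s 0 with hs | hs <;> rcases le_total t 0 with ht | ht <;>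
    simp only [max_eq_left, max_eq_right, hs, ht] <;> nlinarith [sq_nonneg (s - t)]

lemma max_zero_sq_le_add_two_mul (s t : ℝ) :
    max s 0 ^ 2 ≤ max t 0 ^ 2 + 2 * max t 0 * (s - t) + (s - t) ^ 2 := by
  rcases le_total s 0 with hs | hs <;> rcases le_total t 0 with ht | ht <;>
    simp only [max_eq_left, max_eq_right, hs, ht] <;> nlinarith

lemma hasDerivAt_max_zero_sq (t : ℝ) :
    HasDerivAt (fun s : ℝ => max s 0 ^ 2) (2 * max t 0) t := by
  rw [hasDerivAt_iff_isLittleO]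
  refine Asymptotics.IsBigO.trans_isLittleO (g := fun s => ‖s - t‖ ^ 2) ?_
    (Asymptotics.isLittleO_pow_sub_sub t one_lt_two)
  refine Asymptotics.IsBigO.of_bound 1 (.of_forall fun s => ?_)
  rw [one_mul, smul_eq_mul, norm_pow, norm_norm, Real.norm_eq_abs (s - t), sq_abs,
    Real.norm_of_nonneg (by linarith [add_two_mul_le_max_zero_sq s t])]
  linarith [max_zero_sq_le_add_two_mul s t]

lemma contDiff_max_zero_sq : ContDiff ℝ 1 fun s : ℝ => max s 0 ^ 2 := by
  rw [contDiff_one_iff_deriv]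
  refine ⟨fun t => (hasDerivAt_max_zero_sq t).differentiableAt, ?_⟩
  rw [show deriv (fun s : ℝ => max s 0 ^ 2) = fun t => 2 * max t 0 from
    funext fun t => (hasDerivAt_max_zero_sq t).deriv]
  fun_prop

/-- A concave truncation of class `C^{1,1}`: it is the identity below `c - e` and the constant
`c - e / 2` above `c`. -/
def smoothTrunc (c e s : ℝ) : ℝ :=
  s - (max (s - (c - e)) 0 ^ 2 - max (s - c) 0 ^ 2) / (2 * e)

/-- The derivative of `smoothTrunc c e`, which decreases from `1` to `0` on `[c - e, c]`. -/
def smoothTruncDeriv (c e s : ℝ) : ℝ :=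
  1 - (max (s - (c - e)) 0 - max (s - c) 0) / e

lemma hasDerivAt_smoothTrunc (c e t : ℝ) :
    HasDerivAt (smoothTrunc c e) (smoothTruncDeriv c e t) t := by
  have hsq : ∀ d, HasDerivAt (fun s : ℝ => max (s - d) 0 ^ 2) (2 * max (t - d) 0) t := fun d =>
    (hasDerivAt_max_zero_sq (t - d)).comp_sub_const t d
  refine ((hasDerivAt_id t).sub (((hsq (c - e)).sub (hsq c)).div_const (2 * e))).congr_deriv ?_
  rw [smoothTruncDeriv, ← mul_sub, mul_div_mul_left _ _ two_ne_zero]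

variable {c e s : ℝ}

lemma smoothTrunc_of_le (he : 0 < e) (hs : c ≤ s) : smoothTrunc c e s = c - e / 2 := by
  rw [smoothTrunc, max_eq_left (by linarith), max_eq_left (by linarith)]
  field_simp
  ring

lemma smoothTrunc_le_self (he : 0 < e) : smoothTrunc c e s ≤ s := by
  refine sub_le_self _ (div_nonneg (sub_nonneg.2 ?_) (by positivity))
  gcongr
  linarith

lemma smoothTruncDeriv_mem_Icc (he : 0 < e) : smoothTruncDeriv c e s ∈ Icc 0 1 := by
  have hmono : max (s - c) 0 ≤ max (s - (c - e)) 0 := max_le_max (by linarith) le_rfl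
  have hlip : max (s - (c - e)) 0 ≤ max (s - c) 0 + e :=
    max_le (by linarith [le_max_left (s - c) 0]) (by linarith [le_max_right (s - c) 0])
  rw [smoothTruncDeriv, mem_Icc, sub_nonneg, div_le_one he, sub_le_self_iff]
  exact ⟨by linarith, div_nonneg (sub_nonneg.2 hmono) he.le⟩

lemma lipschitzWith_smoothTrunc (he : 0 < e) : LipschitzWith 1 (smoothTrunc c e) := by
  refine lipschitzWith_of_nnnorm_deriv_le
    (fun t => (hasDerivAt_smoothTrunc c e t).differentiableAt) fun t => ?_
  have hmem : smoothTruncDeriv c e t ∈ Icc 0 1 := smoothTruncDeriv_mem_Icc he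
  rw [(hasDerivAt_smoothTrunc c e t).deriv, ← NNReal.coe_le_coe, coe_nnnorm,
    Real.norm_of_nonneg hmem.1]
  exact hmem.2

lemma le_smoothTrunc (he : 0 < e) (s t : ℝ) :
    smoothTrunc c e t + smoothTruncDeriv c e t * (s - t) - (2 * e)⁻¹ * (s - t) ^ 2 ≤
      smoothTrunc c e s := by
  have hup := max_zero_sq_le_add_two_mul (s - (c - e)) (t - (c - e))
  have hlow := add_two_mul_le_max_zero_sq (s - c) (t - c)
  rw [sub_sub_sub_cancel_right] at hup hlow
  simp only [smoothTrunc, smoothTruncDeriv]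
  rw [← sub_nonneg]
  refine (div_nonneg (sub_nonneg.2 (add_le_add hup hlow)) (by positivity : 0 ≤ 2 * e)).trans_eq ?_
  field_simp
  ring

end SmoothTruncation

section LowerBound

variable {Ω : Set (Eu n)} {b : Eu n → Eu n} {x : Eu n} {L : NNReal} {Λ : ℝ}

lemma ViscSub.exists_gradient_eq_smul {H : Eu n → Eu n → ℝ} {V : Eu n → ℝ} (hv : ViscSub H Ω V)
    (hΩ : IsOpen Ω) (hV : LipschitzOnWith L V Ω) (hx : x ∈ Ω) (hH : H x 0 ≤ 0) {F : ℝ → ℝ}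
    {g q : ℝ} (hg : 0 ≤ g) (hq : 0 ≤ q)
    (hF : ∀ s, F (V x) + g * (s - V x) - q * (s - V x) ^ 2 ≤ F s) {φ : Eu n → ℝ}
    (hφ : ContDiff ℝ 1 φ) (hmax : IsLocalMax (fun y => F (V y) - φ y) x) :
    ∃ p, gradient φ x = g • p ∧ H x p ≤ 0 := by
  set ψ : Eu n → ℝ := fun y => φ y + q * L ^ 2 * ‖y - x‖ ^ 2 with hψ
  have hψgrad : HasGradientAt ψ (gradient φ x) x := by
    simpa using hasGradientAt_add (hasGradientAt_of_contDiff hφ x)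
      (hasGradientAt_const_mul (q * L ^ 2) (hasGradientAt_norm_sub_sq x x))
  have hψmax : IsLocalMax (fun y => g * V y - ψ y) x := by
    filter_upwards [hmax, hΩ.mem_nhds hx] with y hy hyΩ
    have hdist : |V y - V x| ≤ L * ‖y - x‖ := by
      simpa [Real.dist_eq, dist_eq_norm] using hV.dist_le_mul y hyΩ x hx
    have hsq : q * (V y - V x) ^ 2 ≤ q * (L * ‖y - x‖) ^ 2 := by
      rw [← sq_abs (V y - V x)]
      gcongr
    simp only [hψ, sub_self, norm_zero]
    linarith [hF (V y)]
  rcases hg.eq_or_lt with rfl | hgpos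
  · refine ⟨0, ?_, hH⟩
    rw [zero_smul]
    exact gradient_eq_of_isLocalMax_sub (hasGradientAt_const x (0 : ℝ)) hψgrad
      (by simpa only [zero_mul] using hψmax)
  · refine ⟨g⁻¹ • gradient φ x, by rw [smul_inv_smul₀ hgpos.ne'], ?_⟩
    have hscaled : IsLocalMax (fun y => V y - g⁻¹ * ψ y) x := by
      filter_upwards [hψmax] with y hy
      have := mul_le_mul_of_nonneg_left hy (inv_nonneg.2 hg)
      rwa [mul_sub, mul_sub, inv_mul_cancel_left₀ hgpos.ne', inv_mul_cancel_left₀ hgpos.ne'] at this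
    rw [← (hasGradientAt_const_mul g⁻¹ hψgrad).gradient]
    exact hv _ (contDiff_const.mul (hφ.add (contDiff_const.mul (contDiff_norm_sub_sq x)))) x hx
      (hscaled.on Ω)

variable {α α' : Eu n → Matrix (Fin n) (Fin n) ℝ}

lemma Ham_smul_nonpos {p : Eu n} {g lam : ℝ} (hg : 0 ≤ g) (hglam : g ≤ lam)
    (hα' : 0 ≤ mquad (α' x) p) (hle : lam * mquad (α' x) p ≤ mquad (α x) p)
    (hp : Ham α b x p ≤ 0) : Ham α' b x (g • p) ≤ 0 := by
  rw [Ham, dotp_eq_inner] at *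
  rw [mquad_smul_right, inner_smul_right]
  have hmono : g * mquad (α' x) p ≤ lam * mquad (α' x) p := by gcongr
  calc g ^ 2 * mquad (α' x) p + g * inner ℝ (b x) p
      = g * (g * mquad (α' x) p + inner ℝ (b x) p) := by ring
    _ ≤ 0 := mul_nonpos_of_nonneg_of_nonpos hg (by linarith)

/-- `C¹` functions which are subsolutions for every coefficient field bounded above by `Λ`. -/
structure IsBarrier (Λ : ℝ) (b : Eu n → Eu n) (Ω : Set (Eu n)) (Ψ : Eu n → ℝ) : Prop where
  contDiff : ContDiff ℝ 1 Ψ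
  nonpos : ∀ x ∈ Ω, Λ * ‖gradient Ψ x‖ ^ 2 + dotp (b x) (gradient Ψ x) ≤ 0

lemma isBarrier_zero : IsBarrier Λ b Ω 0 where
  contDiff := contDiff_const
  nonpos x _ := by
    rw [show gradient (0 : Eu n → ℝ) x = 0 from (hasGradientAt_const x (0 : ℝ)).gradient]
    simp [dotp_eq_inner]

lemma IsBarrier.Ham_nonpos {Ψ : Eu n → ℝ} (hΨ : IsBarrier Λ b Ω Ψ) (hx : x ∈ Ω)
    (hα : ∀ p, mquad (α x) p ≤ Λ * ‖p‖ ^ 2) : Ham α b x (gradient Ψ x) ≤ 0 :=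
  (add_le_add_left (hα _) _).trans (hΨ.nonpos x hx)

/-- Uniform ellipticity on `Ω` of the quadratic forms of a coefficient field. -/
def EllipticOn (θ Λ : ℝ) (α : Eu n → Matrix (Fin n) (Fin n) ℝ) (Ω : Set (Eu n)) : Prop :=
  ∀ x ∈ Ω, ∀ p, θ * ‖p‖ ^ 2 ≤ mquad (α x) p ∧ mquad (α x) p ≤ Λ * ‖p‖ ^ 2

lemma EllipticOn.mono {θ θ' Λ' : ℝ} (hα : EllipticOn θ Λ α Ω) (hθ : θ' ≤ θ) (hΛ : Λ ≤ Λ') :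
    EllipticOn θ' Λ' α Ω := fun x hx p =>
  ⟨(mul_le_mul_of_nonneg_right hθ (sq_nonneg _)).trans (hα x hx p).1,
    (hα x hx p).2.trans (mul_le_mul_of_nonneg_right hΛ (sq_nonneg _))⟩

variable {V Ψ : Eu n → ℝ} {c e lam θ : ℝ}

/- Where `V > c` the truncation of `V` is locally constant and only `Ψ` matters; elsewhere `Ψ`
vanishes and the factor `lam` absorbs the difference between `α` and `α'`. -/
lemma viscSub_smoothTrunc_add (hV : ViscSub (Ham α b) Ω V) (hΩ : IsOpen Ω)
    (hVL : LipschitzOnWith L V Ω) (he : 0 < e) (hlam : 0 ≤ lam) (hΨ : IsBarrier Λ b Ω Ψ)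
    (hα' : ∀ x ∈ Ω, ∀ p, 0 ≤ mquad (α' x) p ∧ mquad (α' x) p ≤ Λ * ‖p‖ ^ 2)
    (hlow : ∀ x ∈ Ω, V x ≤ c →
      (∀ᶠ y in 𝓝 x, Ψ y = 0) ∧ ∀ p, lam * mquad (α' x) p ≤ mquad (α x) p) :
    ViscSub (Ham α' b) Ω fun x => lam * (smoothTrunc c e (V x) - smoothTrunc c e 0) + Ψ x := by
  intro φ hφ x hx hmaxOn
  have hmax := hmaxOn.isLocalMax (hΩ.mem_nhds hx)
  rcases lt_or_ge c (V x) with hVx | hVx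
  · have hcont : ContinuousAt V x := hVL.continuousOn.continuousAt (hΩ.mem_nhds hx)
    have hΨmax : IsLocalMax (fun y => Ψ y - φ y) x := by
      filter_upwards [hmax, hcont.eventually_const_lt hVx] with y hy hVy
      simp only [smoothTrunc_of_le he hVx.le, smoothTrunc_of_le he hVy.le] at hy
      linarith
    rw [gradient_eq_of_isLocalMax_sub (hasGradientAt_of_contDiff hΨ.contDiff x)
      (hasGradientAt_of_contDiff hφ x) hΨmax]
    exact hΨ.Ham_nonpos hx fun p => (hα' x hx p).2
  · obtain ⟨hΨ0, hle⟩ := hlow x hx hVx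
    have hFmax : IsLocalMax (fun y => lam * smoothTrunc c e (V y) - φ y) x := by
      filter_upwards [hmax, hΨ0] with y hy hΨy
      simp only [hΨy, hΨ0.self_of_nhds] at hy
      linarith
    have hderiv : smoothTruncDeriv c e (V x) ∈ Icc 0 1 := smoothTruncDeriv_mem_Icc he
    have hg : 0 ≤ lam * smoothTruncDeriv c e (V x) := mul_nonneg hlam hderiv.1
    obtain ⟨p, hp, hHp⟩ := hV.exists_gradient_eq_smul hΩ hVL hx (Ham_zero α b x).le
      (F := fun s => lam * smoothTrunc c e s) (q := lam * (2 * e)⁻¹) hg (by positivity)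
      (fun s => by
        linarith [mul_le_mul_of_nonneg_left (le_smoothTrunc (c := c) he s (V x)) hlam]) hφ hFmax
    rw [hp]
    exact Ham_smul_nonpos hg (mul_le_of_le_one_right hlam hderiv.2) (hα' x hx p).1 (hle p) hHp

lemma IsAdmissible.smoothTrunc_add (hV : IsAdmissible α b Ω V) (hΩ : IsOpen Ω)
    (hbd : Bornology.IsBounded Ω) (he : 0 < e) (hlam : 0 ≤ lam) (hΨ : IsBarrier Λ b Ω Ψ)
    (hΨ0 : Ψ 0 = 0) (hα' : ∀ x ∈ Ω, ∀ p, 0 ≤ mquad (α' x) p ∧ mquad (α' x) p ≤ Λ * ‖p‖ ^ 2)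
    (hlow : ∀ x ∈ Ω, V x ≤ c →
      (∀ᶠ y in 𝓝 x, Ψ y = 0) ∧ ∀ p, lam * mquad (α' x) p ≤ mquad (α x) p) :
    IsAdmissible α' b Ω
      fun x => lam * (smoothTrunc c e (V x) - smoothTrunc c e 0) + Ψ x := by
  obtain ⟨L, hL⟩ := hV.lipschitzOnWith
  refine ⟨?_, by simp [hV.map_zero, hΨ0],
    viscSub_smoothTrunc_add hV.viscSub hΩ (hL.mono subset_closure) he hlam hΨ hα' hlow⟩
  obtain ⟨K, hK⟩ : ∃ K, LipschitzOnWith K Ψ (closure Ω) :=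
    hΨ.contDiff.locallyLipschitz.locallyLipschitzOn.exists_lipschitzOnWith_of_compact
      hbd.isCompact_closure
  have hscale : LipschitzWith ‖lam‖₊ fun s : ℝ => lam * (s - smoothTrunc c e 0) :=
    .of_dist_le_mul fun s t => by
      rw [Real.dist_eq, Real.dist_eq, ← mul_sub, sub_sub_sub_cancel_right, abs_mul, coe_nnnorm,
        Real.norm_eq_abs]
  exact ⟨_, ((hscale.comp (lipschitzWith_smoothTrunc he)).comp_lipschitzOnWith hL).add hK⟩

lemma isCompact_setOf_le_and_subset (hbd : Bornology.IsBounded Ω) (hΩ : IsOpen Ω)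
    (hV : ContinuousOn V (closure Ω)) (hfr : ∀ y ∈ frontier Ω, c < V y) :
    IsCompact {x ∈ closure Ω | V x ≤ c} ∧ {x ∈ closure Ω | V x ≤ c} ⊆ Ω := by
  refine ⟨hbd.isCompact_closure.of_isClosed_subset
    (hV.preimage_isClosed_of_isClosed isClosed_closure isClosed_Iic) inter_subset_left, ?_⟩
  rintro x ⟨hx, hVx⟩
  by_contra hxΩ
  exact (hfr x (hΩ.frontier_eq ▸ ⟨hx, hxΩ⟩)).not_ge hVx

variable {ι : Type*} {l : Filter ι} {αs : ι → Eu n → Matrix (Fin n) (Fin n) ℝ} {M ε : ℝ}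

lemma exists_truncation_parameter (M : ℝ) (hε : 0 < ε) :
    ∃ e ∈ Ioo (0 : ℝ) 1, M - ε ≤ (1 - e) * (M - e - e / 2) := by
  have hlim : Tendsto (fun e : ℝ => (1 - e) * (M - e - e / 2)) (𝓝[>] 0) (𝓝 M) :=
    tendsto_nhdsWithin_of_tendsto_nhds
      (Continuous.tendsto' (by fun_prop) _ _ (by ring))
  obtain ⟨e, hlt, he⟩ := ((hlim.eventually_const_lt (sub_lt_self M hε)).and
    (Ioo_mem_nhdsGT (zero_lt_one' ℝ))).exists
  exact ⟨e, he, hlt.le⟩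

lemma TendstoLocallyInForm.eventually_le_Vq (h : TendstoLocallyInForm αs α l Ω) (hΩ : IsOpen Ω)
    (hbd : Bornology.IsBounded Ω) (h0 : (0 : Eu n) ∈ Ω) (hα : ContinuousOn α Ω)
    (hb : Continuous b) (hL : EquiLipschitz L α b Ω)
    (hLs : ∀ᶠ i in l, EquiLipschitz L (αs i) b Ω) (hθ : 0 < θ) (hell : EllipticOn θ Λ α Ω)
    (hells : ∀ᶠ i in l, EllipticOn θ Λ (αs i) Ω) (hM : ∀ y ∈ frontier Ω, M ≤ Vq α b Ω y)
    (hΨ : IsBarrier Λ b Ω Ψ) (hΨ0 : Ψ 0 = 0)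
    (hΨV : ∀ x ∈ Ω, Vq α b Ω x < M → ∀ᶠ y in 𝓝 x, Ψ y = 0) (hε : 0 < ε) :
    ∀ᶠ i in l, ∀ y ∈ frontier Ω, M - ε + Ψ y ≤ Vq (αs i) b Ω y := by
  obtain ⟨e, ⟨he, he1⟩, hMe⟩ := exists_truncation_parameter M hε
  have hV := isAdmissible_Vq hΩ h0 hα hb hL
  obtain ⟨hKc, hKΩ⟩ := isCompact_setOf_le_and_subset hbd hΩ
    (lipschitzOnWith_Vq hL hΩ h0).continuousOn
    fun y hy => (sub_lt_self M he).trans_le (hM y hy)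
  filter_upwards [hLs, hells, h _ hKΩ hKc (e * θ) (by positivity)] with i hLi helli hclose y hy
  have hadm := hV.smoothTrunc_add (α' := αs i) (c := M - e) (lam := 1 - e) hΩ hbd he
    (by linarith) hΨ hΨ0 (fun x hx p => ⟨(by positivity : 0 ≤ θ * ‖p‖ ^ 2).trans (helli x hx p).1,
      (helli x hx p).2⟩) fun x hx hVx => ⟨hΨV x hx (by linarith), fun p => ?_⟩
  · have hlow := le_Vq hLi h0 (frontier_subset_closure hy) hadm
    rw [smoothTrunc_of_le he (by linarith [hM y hy])] at hlow
    have : (1 - e) * smoothTrunc (M - e) e 0 ≤ 0 :=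
      mul_nonpos_of_nonneg_of_nonpos (by linarith) (smoothTrunc_le_self he)
    linarith
  · have hup := (abs_le.1 (hclose x ⟨subset_closure hx, hVx⟩ p)).2
    have hθp := (hell x hx p).1
    have hpos : 0 ≤ mquad (α x) p := (by positivity : 0 ≤ θ * ‖p‖ ^ 2).trans hθp
    calc (1 - e) * mquad (αs i x) p ≤ (1 - e) * (mquad (α x) p + e * mquad (α x) p) := by
          gcongr
          linarith [mul_le_mul_of_nonneg_left hθp he.le]
      _ ≤ mquad (α x) p := by nlinarith [mul_nonneg (mul_nonneg he.le he.le) hpos]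

end LowerBound

section Barrier

variable {Ω : Set (Eu n)} {b : Eu n → Eu n} {ρ : Eu n → ℝ} {x z : Eu n} {r κ Λ R : ℝ}

/-- The squared positive part of `ρ + r² - ‖· - z‖²`, times `κ`. Inside `{ρ < 0}` it lives in
`ball z r`, and near `z` its gradient is a nonnegative multiple of nearly `∇ρ z`, against which
an inward drift has a negative component. -/
def boundaryBump (ρ : Eu n → ℝ) (z : Eu n) (r κ : ℝ) (x : Eu n) : ℝ :=
  κ * max (ρ x + (r ^ 2 - ‖x - z‖ ^ 2)) 0 ^ 2

lemma contDiff_boundaryBump (hρ : ContDiff ℝ 1 ρ) (z : Eu n) (r κ : ℝ) :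
    ContDiff ℝ 1 (boundaryBump ρ z r κ) :=
  contDiff_const.mul (contDiff_max_zero_sq.comp
    (hρ.add (contDiff_const.sub (contDiff_norm_sub_sq z))))

lemma gradient_boundaryBump (hρ : ContDiff ℝ 1 ρ) (z : Eu n) (r κ : ℝ) (x : Eu n) :
    gradient (boundaryBump ρ z r κ) x =
      (2 * κ * max (ρ x + (r ^ 2 - ‖x - z‖ ^ 2)) 0) • (gradient ρ x - (2 : ℝ) • (x - z)) := by
  have hinner : HasGradientAt (fun y => ρ y + (r ^ 2 - ‖y - z‖ ^ 2))
      (gradient ρ x - (2 : ℝ) • (x - z)) x := by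
    simpa [sub_eq_add_neg] using hasGradientAt_add (hasGradientAt_of_contDiff hρ x)
      (hasGradientAt_sub (hasGradientAt_const x (r ^ 2)) (hasGradientAt_norm_sub_sq z x))
  have hsq : HasGradientAt (fun y => max (ρ y + (r ^ 2 - ‖y - z‖ ^ 2)) 0 ^ 2)
      ((2 * max (ρ x + (r ^ 2 - ‖x - z‖ ^ 2)) 0) • (gradient ρ x - (2 : ℝ) • (x - z))) x := by
    rw [hasGradientAt_iff_hasFDerivAt, map_smul]
    exact (hasDerivAt_max_zero_sq _).comp_hasFDerivAt x hinner.hasFDerivAt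
  rw [show gradient (boundaryBump ρ z r κ) x = _ from (hasGradientAt_const_mul κ hsq).gradient,
    smul_smul]
  ring_nf

lemma boundaryBump_eq_zero_of_lt (hρx : ρ x < 0) (hx : r < ‖x - z‖) (hr : 0 ≤ r) :
    boundaryBump ρ z r κ x = 0 := by
  have hsq : r ^ 2 ≤ ‖x - z‖ ^ 2 := by gcongr
  rw [boundaryBump, max_eq_right (by linarith)]
  ring

lemma quadratic_add_linear_nonpos {c s E : ℝ} {β g : Eu n} (hΛ : 0 ≤ Λ) (hs : 0 ≤ s)
    (hg : ‖g‖ ≤ E) (hβ : inner ℝ β g ≤ -c) (hsE : s * (Λ * E ^ 2) ≤ c) :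
    Λ * ‖s • g‖ ^ 2 + dotp β (s • g) ≤ 0 := by
  have hΛg : s * (Λ * ‖g‖ ^ 2) ≤ s * (Λ * E ^ 2) := by gcongr
  rw [dotp_eq_inner, inner_smul_right, norm_smul, Real.norm_of_nonneg hs]
  calc Λ * (s * ‖g‖) ^ 2 + s * inner ℝ β g
      = s * (s * (Λ * ‖g‖ ^ 2) + inner ℝ β g) := by ring
    _ ≤ 0 := mul_nonpos_of_nonneg_of_nonpos hs (by linarith)

namespace IsC1DefiningFunction

lemma isBarrier_boundaryBump {c E : ℝ} (hρ : IsC1DefiningFunction ρ Ω) (hΛ : 0 ≤ Λ)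
    (hr : 0 ≤ r) (hκ : 0 ≤ κ)
    (hbound : ∀ x ∈ ball z r, ‖gradient ρ x - (2 : ℝ) • (x - z)‖ ≤ E ∧
      inner ℝ (b x) (gradient ρ x - (2 : ℝ) • (x - z)) ≤ -c)
    (hκE : 2 * κ * r ^ 2 * (Λ * E ^ 2) ≤ c) : IsBarrier Λ b Ω (boundaryBump ρ z r κ) where
  contDiff := contDiff_boundaryBump hρ.contDiff z r κ
  nonpos x hx := by
    rw [gradient_boundaryBump hρ.contDiff]
    have hρx : ρ x < 0 := hρ.mem_iff.1 hx
    rcases le_or_gt r ‖x - z‖ with hrx | hrx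
    · have hsq : r ^ 2 ≤ ‖x - z‖ ^ 2 := by gcongr
      rw [max_eq_right (by linarith)]
      simp [dotp_eq_inner]
    · obtain ⟨hgE, hgc⟩ := hbound x (mem_ball_iff_norm.2 hrx)
      refine quadratic_add_linear_nonpos hΛ (by positivity) hgE hgc (le_trans ?_ hκE)
      gcongr
      exact max_le (by linarith [sq_nonneg ‖x - z‖]) (sq_nonneg r)

lemma exists_forall_ball_inward (hρ : IsC1DefiningFunction ρ Ω) (hb : Continuous b)
    (hin : inner ℝ (b z) (gradient ρ z) < 0) :
    ∃ r > 0, ∃ c > 0, ∃ E, ∀ x ∈ ball z r, ‖gradient ρ x - (2 : ℝ) • (x - z)‖ ≤ E ∧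
      inner ℝ (b x) (gradient ρ x - (2 : ℝ) • (x - z)) ≤ -c := by
  set g : Eu n → Eu n := fun x => gradient ρ x - (2 : ℝ) • (x - z) with hg
  have hgz : g z = gradient ρ z := by simp [hg]
  have hcont : Continuous g :=
    (continuous_gradient_of_contDiff hρ.contDiff).sub (by fun_prop)
  rw [← hgz] at hin
  obtain ⟨c, hc, hc0⟩ := exists_between hin
  have hnorm := hcont.norm.continuousAt.eventually_lt_const (lt_add_one ‖g z‖)
  have hinner := (hb.inner hcont).continuousAt.eventually_lt_const hc
  obtain ⟨r, hr, hball⟩ := Metric.eventually_nhds_iff_ball.1 (hnorm.and hinner)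
  refine ⟨r, hr, -c, neg_pos.2 hc0, ‖g z‖ + 1, fun x hx => ?_⟩
  exact ⟨(hball x hx).1.le, by simpa using (hball x hx).2.le⟩

lemma exists_isBarrier (hρ : IsC1DefiningFunction ρ Ω) (hb : Continuous b) (hz : z ∉ Ω)
    (hin : inner ℝ (b z) (gradient ρ z) < 0) (hΛ : 0 ≤ Λ) (hR : 0 < R) :
    ∃ Ψ, IsBarrier Λ b Ω Ψ ∧ 0 < Ψ z ∧ ∀ x ∈ Ω, R < ‖x - z‖ → ∀ᶠ y in 𝓝 x, Ψ y = 0 := by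
  obtain ⟨r₀, hr₀, c, hc, E, hbound⟩ := hρ.exists_forall_ball_inward hb hin
  set r := min r₀ R
  have hr : 0 < r := lt_min hr₀ hR
  set κ := c / (2 * r ^ 2 * (Λ * E ^ 2 + 1))
  have hκ : 0 < κ := by positivity
  have hκE : 2 * κ * r ^ 2 * (Λ * E ^ 2) ≤ c := by
    have : 2 * κ * r ^ 2 * (Λ * E ^ 2 + 1) = c := by
      simp only [κ]
      field_simp
    linarith [show 0 ≤ 2 * κ * r ^ 2 by positivity]
  refine ⟨boundaryBump ρ z r κ, hρ.isBarrier_boundaryBump hΛ hr.le hκ.le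
    (fun x hx => hbound x (ball_subset_ball (min_le_left _ _) hx)) hκE, ?_, fun x hx hRx => ?_⟩
  · have hρz : 0 ≤ ρ z := not_lt.1 (hρ.mem_iff.not.1 hz)
    rw [boundaryBump, sub_self, norm_zero, zero_pow two_ne_zero, sub_zero]
    positivity
  · have hfar : ∀ᶠ y in 𝓝 x, R < ‖y - z‖ :=
      (by fun_prop : ContinuousAt (fun y => ‖y - z‖) x).eventually_const_lt hRx
    filter_upwards [hρ.isOpen.mem_nhds hx, hfar] with y hy hRy
    exact boundaryBump_eq_zero_of_lt (hρ.mem_iff.1 hy) ((min_le_right _ _).trans_lt hRy) hr.le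

end IsC1DefiningFunction

end Barrier

section Minimum

variable {Ω : Set (Eu n)} {b : Eu n → Eu n} {α : Eu n → Matrix (Fin n) (Fin n) ℝ} {L : NNReal}

lemma Mq_le (hL : EquiLipschitz L α b Ω) (hΩ : IsOpen Ω) (h0 : (0 : Eu n) ∈ Ω) {y : Eu n}
    (hy : y ∈ frontier Ω) : Mq α b Ω ≤ Vq α b Ω y := by
  refine csInf_le ⟨0, ?_⟩ (mem_image_of_mem _ hy)
  rintro _ ⟨x, hx, rfl⟩
  exact Vq_nonneg hL hΩ h0 (frontier_subset_closure hx)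

lemma le_Mq (hfr : (frontier Ω).Nonempty) {m : ℝ} (h : ∀ y ∈ frontier Ω, m ≤ Vq α b Ω y) :
    m ≤ Mq α b Ω :=
  le_csInf (hfr.image _) (forall_mem_image.2 h)

lemma Vq_eq_Mq_of_mem_argminV {x : Eu n} (hx : x ∈ argminV α b Ω) : Vq α b Ω x = Mq α b Ω :=
  (IsLeast.csInf_eq ⟨mem_image_of_mem _ hx.1, forall_mem_image.2 hx.2⟩).symm

lemma argminV_nonempty (hL : EquiLipschitz L α b Ω) (hΩ : IsOpen Ω) (h0 : (0 : Eu n) ∈ Ω)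
    (hbd : Bornology.IsBounded Ω) (hfr : (frontier Ω).Nonempty) : (argminV α b Ω).Nonempty := by
  have hcompact : IsCompact (frontier Ω) :=
    hbd.isCompact_closure.of_isClosed_subset isClosed_frontier frontier_subset_closure
  obtain ⟨x, hx, hmin⟩ := hcompact.exists_isMinOn hfr
    ((lipschitzOnWith_Vq hL hΩ h0).continuousOn.mono frontier_subset_closure)
  exact ⟨x, hx, isMinOn_iff.1 hmin⟩

variable {ι : Type*} {l : Filter ι} {αs : ι → Eu n → Matrix (Fin n) (Fin n) ℝ} {θ Λ : ℝ}

lemma TendstoLocallyInForm.tendsto_Mq (h : TendstoLocallyInForm αs α l Ω) (hΩ : IsOpen Ω)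
    (hbd : Bornology.IsBounded Ω) (h0 : (0 : Eu n) ∈ Ω) (hfr : (frontier Ω).Nonempty)
    (hα : ContinuousOn α Ω) (hb : Continuous b) (hL : EquiLipschitz L α b Ω)
    (hLs : ∀ᶠ i in l, EquiLipschitz L (αs i) b Ω) (hθ : 0 < θ) (hell : EllipticOn θ Λ α Ω)
    (hells : ∀ᶠ i in l, EllipticOn θ Λ (αs i) Ω) :
    Tendsto (fun i => Mq (αs i) b Ω) l (𝓝 (Mq α b Ω)) := by
  refine tendsto_order.2 ⟨fun m hm => ?_, fun m hm => ?_⟩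
  · obtain ⟨m', hmm', hm'⟩ := exists_between hm
    filter_upwards [h.eventually_le_Vq hΩ hbd h0 hα hb hL hLs hθ hell hells
      (fun y hy => Mq_le hL hΩ h0 hy) isBarrier_zero rfl (fun x _ _ => .of_forall fun _ => rfl)
      (sub_pos.2 hm')] with i hi
    refine hmm'.trans_le (le_Mq hfr fun y hy => ?_)
    simpa using hi y hy
  · obtain ⟨y, hy⟩ := argminV_nonempty hL hΩ h0 hbd hfr
    obtain ⟨m', hm', hmm'⟩ := exists_between hm
    rw [← Vq_eq_Mq_of_mem_argminV hy] at hm'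
    filter_upwards [hLs, h.eventually_Vq_le hΩ h0 hα hb hL hLs (frontier_subset_closure hy.1) hm']
      with i hLi hi
    exact ((Mq_le hLi hΩ h0 hy.1).trans hi).trans_lt hmm'

lemma exists_forall_lt_dist_of_lt {X : Type*} [PseudoMetricSpace X] {s : Set X} {V : X → ℝ}
    (hV : ContinuousOn V s) {o z : X} (hz : z ∈ s) (hoz : 0 < dist o z) {m : ℝ} (hm : m < V z) :
    ∃ R > 0, R < dist o z ∧ ∀ x ∈ s, V x < m → R < dist x z := by
  obtain ⟨R, hR, hball⟩ := Metric.eventually_nhds_iff.1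
    (eventually_nhdsWithin_iff.1 ((hV z hz).eventually_const_lt hm))
  refine ⟨min R (dist o z) / 2, by positivity, ?_, fun x hx hVx => ?_⟩
  · linarith [min_le_right R (dist o z)]
  · by_contra! hxR
    have hlt : min R (dist o z) / 2 < R := by
      linarith [min_le_left R (dist o z), lt_min hR hoz]
    exact (hball (hxR.trans_lt hlt) hx).not_gt hVx

lemma TendstoLocallyInForm.mem_argminV_of_tendsto [NeBot l] {ρ : Eu n → ℝ}
    (h : TendstoLocallyInForm αs α l Ω) (hρ : IsC1DefiningFunction ρ Ω)
    (hbd : Bornology.IsBounded Ω) (h0 : (0 : Eu n) ∈ Ω) (hα : ContinuousOn α Ω)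
    (hb : Continuous b) (hin : ∀ x ∈ frontier Ω, inner ℝ (b x) (gradient ρ x) < 0)
    (hL : EquiLipschitz L α b Ω) (hLs : ∀ᶠ i in l, EquiLipschitz L (αs i) b Ω) (hθ : 0 < θ)
    (hΛ : 0 ≤ Λ) (hell : EllipticOn θ Λ α Ω) (hells : ∀ᶠ i in l, EllipticOn θ Λ (αs i) Ω)
    {xs : ι → Eu n} {z : Eu n} (hxs : ∀ i, xs i ∈ argminV (αs i) b Ω)
    (hlim : Tendsto xs l (𝓝 z)) : z ∈ argminV α b Ω := by
  have hΩ := hρ.isOpen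
  have hz : z ∈ frontier Ω :=
    isClosed_frontier.mem_of_tendsto hlim (.of_forall fun i => (hxs i).1)
  have hzΩ : z ∉ Ω := (hΩ.frontier_eq ▸ hz).2
  refine ⟨hz, fun y hy => le_trans ?_ (Mq_le hL hΩ h0 hy)⟩
  by_contra! hlt
  obtain ⟨R, hR, hR0, hRV⟩ := exists_forall_lt_dist_of_lt
    (lipschitzOnWith_Vq hL hΩ h0).continuousOn (frontier_subset_closure hz)
    (dist_pos.2 fun h0z => hzΩ (h0z ▸ h0)) hlt
  obtain ⟨Ψ, hΨ, hΨz, hΨ0⟩ := hρ.exists_isBarrier hb hzΩ (hin z hz) hΛ hR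
  simp only [← dist_eq_norm] at hΨ0
  have hlow := h.eventually_le_Vq hΩ hbd h0 hα hb hL hLs hθ hell hells
    (fun y hy => Mq_le hL hΩ h0 hy) hΨ (hΨ0 0 h0 hR0).self_of_nhds
    (fun x hx hVx => hΨ0 x hx (hRV x (subset_closure hx) hVx)) (half_pos hΨz)
  have hMlim := h.tendsto_Mq hΩ hbd h0 ⟨z, hz⟩ hα hb hL hLs hθ hell hells
  have hΨlim := (hΨ.contDiff.continuous.tendsto z).comp hlim
  have hle : Mq α b Ω - Ψ z / 2 + Ψ z ≤ Mq α b Ω := by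
    refine le_of_tendsto_of_tendsto (hΨlim.const_add (Mq α b Ω - Ψ z / 2)) hMlim ?_
    filter_upwards [hlow] with i hi
    exact (hi _ (hxs i).1).trans_eq (Vq_eq_Mq_of_mem_argminV (hxs i))
  linarith

end Minimum

section Perturbation

variable {Ω : Set (Eu n)} {b : Eu n → Eu n}

/-- The modulus `θ(δ)` with which the quadratic forms of `a x c`, `x ∈ K`, vary as `c` ranges over
`[β - δ, β + δ]`. -/
def coeffModulus (a : Eu n → ℝ → Matrix (Fin n) (Fin n) ℝ) (β : ℝ) (K : Set (Eu n)) (δ : ℝ) : ℝ :=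
  sSup {s : ℝ | ∃ x ∈ K, ∃ ξ : Eu n, ‖ξ‖ ≤ 1 ∧
    ∃ c : ℝ, |c - β| ≤ δ ∧ s = |mquad (a x c) ξ - mquad (a x β) ξ|}

lemma coeffModulus_nonneg (a : Eu n → ℝ → Matrix (Fin n) (Fin n) ℝ) (β : ℝ) (K : Set (Eu n))
    (δ : ℝ) : 0 ≤ coeffModulus a β K δ := by
  refine Real.sSup_nonneg ?_
  rintro _ ⟨x, -, ξ, -, c, -, rfl⟩
  exact abs_nonneg _

lemma eventually_forall_abs_mquad_sub_lt {a : Eu n → ℝ → Matrix (Fin n) (Fin n) ℝ}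
    {K : Set (Eu n)} (hK : IsCompact K)
    (ha : ContinuousOn (fun p : Eu n × ℝ => a p.1 p.2) (K ×ˢ univ)) (β : ℝ) {ε : ℝ} (hε : 0 < ε) :
    ∀ᶠ c in 𝓝 β, ∀ x ∈ K, ∀ ξ : Eu n, ‖ξ‖ ≤ 1 → |mquad (a x c) ξ - mquad (a x β) ξ| < ε := by
  have hcoeff : ContinuousOn (fun q : ℝ × Eu n × Eu n => a q.2.1 q.1)
      (univ ×ˢ (K ×ˢ closedBall (0 : Eu n) 1)) :=
    ha.comp (by fun_prop : ContinuousOn (fun q : ℝ × Eu n × Eu n => (q.2.1, q.1)) _)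
      fun q hq => ⟨hq.2.1, mem_univ _⟩
  have hpair : ContinuousOn (fun q : ℝ × Eu n × Eu n => (a q.2.1 q.1, q.2.2))
      (univ ×ˢ (K ×ˢ closedBall (0 : Eu n) 1)) :=
    hcoeff.prodMk (continuous_snd.comp continuous_snd).continuousOn
  have hform := continuous_mquad.comp_continuousOn hpair
  have hcompact : IsCompact (K ×ˢ closedBall (0 : Eu n) 1) := hK.prod (isCompact_closedBall 0 1)
  obtain ⟨v, hv, hclose⟩ := hcompact.mem_uniformity_of_prod
    (f := fun (c : ℝ) (q : Eu n × Eu n) => mquad (a q.1 c) q.2) hform (mem_univ β)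
    (dist_mem_uniformity hε)
  rw [nhdsWithin_univ] at hv
  filter_upwards [hv] with c hc x hx ξ hξ
  have hlt := hclose c hc (x, ξ) ⟨hx, mem_closedBall_zero_iff.2 hξ⟩
  rwa [mem_ofPred_eq, Real.dist_eq] at hlt

lemma tendsto_coeffModulus {a : Eu n → ℝ → Matrix (Fin n) (Fin n) ℝ} {K : Set (Eu n)}
    (hK : IsCompact K) (ha : ContinuousOn (fun p : Eu n × ℝ => a p.1 p.2) (K ×ˢ univ)) (β : ℝ) :
    Tendsto (coeffModulus a β K) (𝓝 0) (𝓝 0) := by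
  refine tendsto_order.2 ⟨fun r hr => .of_forall fun δ => hr.trans_le (coeffModulus_nonneg a β K δ),
    fun r hr => ?_⟩
  obtain ⟨η, hη, hclose⟩ := Metric.eventually_nhds_iff.1
    (eventually_forall_abs_mquad_sub_lt hK ha β (half_pos hr))
  filter_upwards [eventually_lt_nhds hη] with δ hδ
  refine (Real.sSup_le ?_ (half_pos hr).le).trans_lt (half_lt_self hr)
  rintro _ ⟨x, hx, ξ, hξ, c, hc, rfl⟩
  exact (hclose (hc.trans_lt hδ) x hx ξ hξ).le

/-- The coefficient field which is `α + t I` where `χ = 1`, `s I` where `χ = 0`, and interpolates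
linearly in between. -/
def cutoffPerturbation (χ : Eu n → ℝ) (α : Eu n → Matrix (Fin n) (Fin n) ℝ) (t s : ℝ) (x : Eu n) :
    Matrix (Fin n) (Fin n) ℝ :=
  χ x • (α x + t • (1 : Matrix (Fin n) (Fin n) ℝ)) +
    (1 - χ x) • (s • (1 : Matrix (Fin n) (Fin n) ℝ))

variable {α : Eu n → Matrix (Fin n) (Fin n) ℝ} {θ Λ τ s : ℝ}

lemma mquad_cutoffPerturbation (χ : Eu n → ℝ) (α : Eu n → Matrix (Fin n) (Fin n) ℝ) (t s : ℝ)
    (x p : Eu n) : mquad (cutoffPerturbation χ α t s x) p =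
      χ x * (mquad (α x) p + t * ‖p‖ ^ 2) + (1 - χ x) * (s * ‖p‖ ^ 2) := by
  simp only [cutoffPerturbation, mquad_add, mquad_smul, mquad_one]

lemma EllipticOn.cutoffPerturbation {χ : Eu n → ℝ} {t : ℝ} (hα : EllipticOn θ Λ α Ω)
    (ht : |t| ≤ τ) (hs : s ∈ Icc θ Λ) (hχ : ∀ x ∈ Ω, χ x ∈ Icc (0 : ℝ) 1) :
    EllipticOn (θ - τ) (Λ + τ) (cutoffPerturbation χ α t s) Ω := by
  intro x hx p
  obtain ⟨htl, htu⟩ := abs_le.1 ht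
  have : 0 ≤ τ := (abs_nonneg t).trans ht
  obtain ⟨hαl, hαu⟩ := hα x hx p
  have hp : 0 ≤ ‖p‖ ^ 2 := sq_nonneg _
  have hinner : mquad (α x) p + t * ‖p‖ ^ 2 ∈
      Icc ((θ - τ) * ‖p‖ ^ 2) ((Λ + τ) * ‖p‖ ^ 2) :=
    ⟨by linarith [mul_le_mul_of_nonneg_right htl hp],
      by linarith [mul_le_mul_of_nonneg_right htu hp]⟩
  have houter : s * ‖p‖ ^ 2 ∈ Icc ((θ - τ) * ‖p‖ ^ 2) ((Λ + τ) * ‖p‖ ^ 2) :=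
    ⟨mul_le_mul_of_nonneg_right (by linarith [hs.1]) hp,
      mul_le_mul_of_nonneg_right (by linarith [hs.2]) hp⟩
  rw [mquad_cutoffPerturbation]
  exact convex_Icc _ _ hinner houter (hχ x hx).1 (sub_nonneg.2 (hχ x hx).2) (add_sub_cancel _ _)

lemma tendstoLocallyInForm_cutoffPerturbation {ι : Type*} {l : Filter ι} {χ : ι → Eu n → ℝ}
    {t : ι → ℝ} (α : Eu n → Matrix (Fin n) (Fin n) ℝ) (s : ℝ) (ht : Tendsto t l (𝓝 0))
    (hχ : ∀ K ⊆ Ω, IsCompact K → ∀ᶠ i in l, ∀ x ∈ K, χ i x = 1) :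
    TendstoLocallyInForm (fun i => cutoffPerturbation (χ i) α (t i) s) α l Ω := by
  intro K hKΩ hK η hη
  filter_upwards [hχ K hKΩ hK, (tendsto_zero_iff_abs_tendsto_zero t).1 ht |>.eventually_le_const hη]
    with i hχi hti x hx p
  rw [mquad_cutoffPerturbation, hχi x hx, one_mul, sub_self, zero_mul, add_zero,
    add_sub_cancel_left, abs_mul, abs_of_nonneg (sq_nonneg ‖p‖)]
  exact mul_le_mul_of_nonneg_right hti (sq_nonneg _)

lemma eventually_subset_Omd (hΩ : IsOpen Ω) (hfr : (frontier Ω).Nonempty) {K : Set (Eu n)}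
    (hKΩ : K ⊆ Ω) (hK : IsCompact K) : ∀ᶠ δ in 𝓝 0, K ⊆ Omd Ω δ := by
  have hpos : ∀ x ∈ K, 0 < infDist x (frontier Ω) := fun x hx =>
    (isClosed_frontier.notMem_iff_infDist_pos hfr).1
      (fun hxfr => (hΩ.frontier_eq ▸ hxfr : x ∈ closure Ω \ Ω).2 (hKΩ hx))
  obtain ⟨r, hr, hrK⟩ := hK.exists_forall_le' (continuous_infDist_pt _).continuousOn hpos
  filter_upwards [eventually_lt_nhds hr] with δ hδ x hx
  exact ⟨hKΩ hx, hδ.trans_le (hrK x hx)⟩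

lemma IsBdC1With.exists_isC1DefiningFunction {ν : Eu n → Eu n} (hdom : IsBdC1With Ω ν)
    (hin : ∀ x ∈ frontier Ω, dotp (b x) (ν x) < 0) :
    ∃ ρ, IsC1DefiningFunction ρ Ω ∧ ∀ x ∈ frontier Ω, inner ℝ (b x) (gradient ρ x) < 0 := by
  obtain ⟨-, -, ρ, hρ, hΩ, hgrad⟩ := hdom
  refine ⟨ρ, ⟨hρ, hΩ, fun x hx => (hgrad x hx).1⟩, fun x hx => ?_⟩
  have hneg := hin x hx
  rw [(hgrad x hx).2, dotp_eq_inner, inner_smul_right] at hneg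
  exact pos_iff_neg_of_mul_neg hneg |>.1 (inv_pos.2 (norm_pos_iff.2 (hgrad x hx).1))

lemma IsBdC1With.isPreconnected_of_gas {ν : Eu n → Eu n} {X : ℝ → Eu n → Eu n}
    (hdom : IsBdC1With Ω ν) (h0 : (0 : Eu n) ∈ Ω) (hX : GAS b X)
    (hin : ∀ x ∈ frontier Ω, dotp (b x) (ν x) < 0) : IsPreconnected Ω := by
  obtain ⟨ρ, hρ, hin'⟩ := hdom.exists_isC1DefiningFunction hin
  obtain ⟨hX0, hXderiv, hXlim, -⟩ := hX
  exact hρ.isPreconnected_of_inward_flow hin' h0 fun x _ =>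
    ⟨fun t => X t x, hX0 x, hXderiv x, hXlim x⟩

lemma tendsto_Mq_and_kurLimsup_argminV_subset {ν : Eu n → Eu n} (hdom : IsBdC1With Ω ν)
    (h0 : (0 : Eu n) ∈ Ω) (hconn : IsPreconnected Ω) (hb : Continuous b)
    (hin : ∀ x ∈ frontier Ω, dotp (b x) (ν x) < 0) (hθ : 0 < θ) (hα : ContinuousOn α Ω)
    (hell : EllipticOn θ Λ α Ω) (hs : s ∈ Icc θ Λ) {δ₀ : ℝ} {t : ℝ → ℝ}
    (ht : Tendsto t (𝓝[Ioo 0 δ₀] 0) (𝓝 0)) {χ : ℝ → Eu n → ℝ}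
    (hχ : ∀ δ ∈ Ioo 0 δ₀, (∀ x, χ δ x ∈ Icc (0 : ℝ) 1) ∧ ∀ x ∈ Omd Ω δ, χ δ x = 1) :
    Tendsto (fun δ => Mq (cutoffPerturbation (χ δ) α (t δ) s) b Ω) (𝓝[Ioo 0 δ₀] 0)
        (𝓝 (Mq α b Ω)) ∧
      KurLimsup δ₀ (fun δ => argminV (cutoffPerturbation (χ δ) α (t δ) s) b Ω) ⊆
        argminV α b Ω := by
  obtain ⟨ρ, hρ, hinρ⟩ := hdom.exists_isC1DefiningFunction hin
  obtain ⟨hΩ, hbd, -⟩ := hdom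
  rcases (frontier Ω).eq_empty_or_nonempty with hfr | hfr
  · simp [Mq, argminV, KurLimsup, hfr, tendsto_const_nhds]
  have hθ' : 0 < θ - θ / 2 := by linarith
  have hΛ' : 0 ≤ Λ + θ / 2 := by linarith [hs.1.trans hs.2]
  obtain ⟨L, hL⟩ := exists_equiLipschitz hρ hbd hconn hb hθ'
  have hell' : EllipticOn (θ - θ / 2) (Λ + θ / 2) α Ω := hell.mono (by linarith) (by linarith)
  have hells : ∀ᶠ δ in 𝓝[Ioo 0 δ₀] 0,
      EllipticOn (θ - θ / 2) (Λ + θ / 2) (cutoffPerturbation (χ δ) α (t δ) s) Ω := by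
    filter_upwards [self_mem_nhdsWithin,
      ((tendsto_zero_iff_abs_tendsto_zero t).1 ht).eventually_le_const (half_pos hθ)] with δ hδ htδ
    exact hell.cutoffPerturbation htδ hs fun x _ => (hχ δ hδ).1 x
  have hLs := hells.mono fun δ hδ => hL _ fun x hx p => (hδ x hx p).1
  have hLα := hL α fun x hx p => (hell' x hx p).1
  have hconv : TendstoLocallyInForm (fun δ => cutoffPerturbation (χ δ) α (t δ) s) α
      (𝓝[Ioo 0 δ₀] 0) Ω := by
    refine tendstoLocallyInForm_cutoffPerturbation α s ht fun K hKΩ hK => ?_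
    filter_upwards [self_mem_nhdsWithin,
      nhdsWithin_le_nhds (eventually_subset_Omd hΩ hfr hKΩ hK)] with δ hδ hKδ x hx
    exact (hχ δ hδ).2 x (hKδ hx)
  refine ⟨hconv.tendsto_Mq hΩ hbd h0 hfr hα hb hLα hLs hθ' hell' hells, ?_⟩
  rintro z ⟨δs, xs, hδs, hδlim, hxs, hxlim⟩
  have hδ : Tendsto δs atTop (𝓝[Ioo 0 δ₀] 0) := tendsto_nhdsWithin_iff.2 ⟨hδlim, .of_forall hδs⟩
  exact (hconv.comp hδ).mem_argminV_of_tendsto hρ hbd h0 hα hb hinρ hLα (hδ.eventually hLs) hθ' hΛ'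
    hell' (hδ.eventually hells) hxs hxlim

end Perturbation

theorem stmt11_general (θ₀ : ℝ) (hθ : θ₀ ∈ Ioc (0 : ℝ) 1) (Ω : Set (Eu n)) (ν : Eu n → Eu n)
    (a : Eu n → ℝ → Matrix (Fin n) (Fin n) ℝ) (b : Eu n → Eu n) (hdom : IsBdC1With Ω ν)
    (h0 : (0 : Eu n) ∈ Ω) (hconn : IsPreconnected Ω)
    (ha_cont : ContinuousOn (fun p : Eu n × ℝ => a p.1 p.2) (closure Ω ×ˢ univ)) (β₀ δ₀ : ℝ)
    (ha_mem : ∀ x ∈ Ω, memS θ₀ (a x β₀)) (hb : Continuous b)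
    (hin : ∀ x ∈ frontier Ω, dotp (b x) (ν x) < 0) (θd : ℝ → ℝ)
    (hθd : ∀ δ, θd δ = coeffModulus a β₀ (closure Ω) δ) (χ : ℝ → Eu n → ℝ)
    (hχ : ∀ δ ∈ Ioo 0 δ₀, (∀ x, χ δ x ∈ Icc (0 : ℝ) 1) ∧ ∀ x ∈ Omd Ω δ, χ δ x = 1) :
    let αp : ℝ → Eu n → Matrix (Fin n) (Fin n) ℝ := fun δ x =>
      χ δ x • (a x β₀ + θd δ • (1 : Matrix (Fin n) (Fin n) ℝ)) +
        (1 - χ δ x) • (θ₀⁻¹ • (1 : Matrix (Fin n) (Fin n) ℝ))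
    let αm : ℝ → Eu n → Matrix (Fin n) (Fin n) ℝ := fun δ x =>
      χ δ x • (a x β₀ - θd δ • (1 : Matrix (Fin n) (Fin n) ℝ)) +
        (1 - χ δ x) • (θ₀ • (1 : Matrix (Fin n) (Fin n) ℝ))
    let M0 : ℝ := Mq (fun x => a x β₀) b Ω
    let Γ0 : Set (Eu n) := argminV (fun x => a x β₀) b Ω
    (Tendsto (fun δ => Mq (αp δ) b Ω) (𝓝[Ioo 0 δ₀] 0) (𝓝 M0) ∧
      Tendsto (fun δ => Mq (αm δ) b Ω) (𝓝[Ioo 0 δ₀] 0) (𝓝 M0)) ∧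
    KurLimsup δ₀ (fun δ => argminV (αp δ) b Ω) ∪ KurLimsup δ₀ (fun δ => argminV (αm δ) b Ω) ⊆
      Γ0 := by
  intro αp αm M0 Γ0
  have hαm : αm = fun δ => cutoffPerturbation (χ δ) (fun x => a x β₀) (-θd δ) θ₀ := by
    funext δ x
    simp only [αm, cutoffPerturbation, sub_eq_add_neg, neg_smul]
  have hα : ContinuousOn (fun x => a x β₀) Ω :=
    ha_cont.comp (by fun_prop : ContinuousOn (fun x => (x, β₀)) Ω)
      fun x hx => ⟨subset_closure hx, mem_univ _⟩
  have hell : EllipticOn θ₀ θ₀⁻¹ (fun x => a x β₀) Ω := fun x hx => (ha_mem x hx).2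
  have hθle : θ₀ ≤ θ₀⁻¹ := hθ.2.trans ((one_le_inv₀ hθ.1).2 hθ.2)
  have hθlim : Tendsto θd (𝓝[Ioo 0 δ₀] 0) (𝓝 0) := by
    rw [funext hθd]
    exact (tendsto_coeffModulus hdom.2.1.isCompact_closure ha_cont β₀).mono_left nhdsWithin_le_nhds
  obtain ⟨hMp, hΓp⟩ := tendsto_Mq_and_kurLimsup_argminV_subset hdom h0 hconn hb hin hθ.1 hα hell
    (right_mem_Icc.2 hθle) hθlim hχ
  obtain ⟨hMm, hΓm⟩ := tendsto_Mq_and_kurLimsup_argminV_subset hdom h0 hconn hb hin hθ.1 hα hell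
    (left_mem_Icc.2 hθle) (neg_zero (G := ℝ) ▸ hθlim.neg) hχ
  exact ⟨⟨hMp, hαm ▸ hMm⟩, union_subset hΓp (hαm ▸ hΓm)⟩

/-- Proposition 3.1: continuity of the minima and argmins of the perturbed
quasi-potentials. -/
theorem stmt11 {n : ℕ} (θ₀ : ℝ) (hθ : θ₀ ∈ Set.Ioc (0:ℝ) 1)
    (Ω : Set (Eu n)) (ν : Eu n → Eu n)
    (a : Eu n → ℝ → Matrix (Fin n) (Fin n) ℝ) (b : Eu n → Eu n)
    (hdom : IsBdC1With Ω ν) (h0 : (0 : Eu n) ∈ Ω)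
    (ha_cont : ContinuousOn (fun p : Eu n × ℝ => a p.1 p.2) (closure Ω ×ˢ Set.univ))
    (ha_mem : ∀ x ∈ closure Ω, ∀ c : ℝ, memS θ₀ (a x c))
    (hbl : ∃ K : NNReal, LipschitzWith K b) (hb0 : b 0 = 0)
    (hgas : ∃ X : ℝ → Eu n → Eu n, GAS b X)
    (hin : ∀ x ∈ frontier Ω, dotp (b x) (ν x) < 0)
    (β₀ δ₀ : ℝ) (hδ₀ : 0 < δ₀)
    (θd : ℝ → ℝ)
    (hθd : ∀ δ : ℝ, θd δ = sSup {s : ℝ | ∃ x ∈ closure Ω, ∃ ξ : Eu n, ‖ξ‖ ≤ 1 ∧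
      ∃ c : ℝ, |c - β₀| ≤ δ ∧ s = |mquad (a x c) ξ - mquad (a x β₀) ξ|})
    (hθd_small : ∀ δ ∈ Set.Ioo (0:ℝ) δ₀, θd δ ≤ θ₀ / 2)
    (χ : ℝ → Eu n → ℝ)
    (hχ : ∀ δ ∈ Set.Ioo (0:ℝ) δ₀, Continuous (χ δ) ∧
      (∀ x, χ δ x ∈ Set.Icc (0:ℝ) 1) ∧
      (∀ x ∈ Omd Ω δ, χ δ x = 1) ∧ (∀ x ∉ Omd Ω (δ / 2), χ δ x = 0)) :
    let αp : ℝ → Eu n → Matrix (Fin n) (Fin n) ℝ := fun δ x =>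
      χ δ x • (a x β₀ + θd δ • (1 : Matrix (Fin n) (Fin n) ℝ)) +
        (1 - χ δ x) • (θ₀⁻¹ • (1 : Matrix (Fin n) (Fin n) ℝ))
    let αm : ℝ → Eu n → Matrix (Fin n) (Fin n) ℝ := fun δ x =>
      χ δ x • (a x β₀ - θd δ • (1 : Matrix (Fin n) (Fin n) ℝ)) +
        (1 - χ δ x) • (θ₀ • (1 : Matrix (Fin n) (Fin n) ℝ))
    let M0 : ℝ := Mq (fun x => a x β₀) b Ω
    let Γ0 : Set (Eu n) := argminV (fun x => a x β₀) b Ω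
    (Filter.Tendsto (fun δ => Mq (αp δ) b Ω) (nhdsWithin 0 (Set.Ioo 0 δ₀)) (nhds M0) ∧
     Filter.Tendsto (fun δ => Mq (αm δ) b Ω) (nhdsWithin 0 (Set.Ioo 0 δ₀)) (nhds M0)) ∧
    (KurLimsup δ₀ (fun δ => argminV (αp δ) b Ω) ∪
      KurLimsup δ₀ (fun δ => argminV (αm δ) b Ω)) ⊆ Γ0 := by
  obtain ⟨X, hX⟩ := hgas
  obtain ⟨K, hK⟩ := hbl
  exact stmt11_general θ₀ hθ Ω ν a b hdom h0 (hdom.isPreconnected_of_gas h0 hX hin) ha_cont β₀ δ₀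
    (fun x hx => ha_mem x (subset_closure hx) β₀) hK.continuous hin θd hθd χ
    fun δ hδ => ⟨(hχ δ hδ).2.1, (hχ δ hδ).2.2.1⟩
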